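/- arXiv:1701.02616 — 2 statements merged into one kernel-verified Lean document; each statement's English description precedes it below -/
import Mathlib

section
/- Let Ω ⊂ ℂ be a C¹ K-quasidisc, let 2 < α satisfy α(K² − 1) < 2K², and suppose ν := 10^{4α}·((α−2)/(α−1))·(24π²K²)^α < 1. Then for every test function f on Ω, ∬_Ω |f − f_Ω|² dxdy ≤ (K²C_α²/π) · ((2α−2)/(α−2))^{(2α−2)/α} · exp{K²π²(2 + π⁴)²/(2 log 3)} · |Ω| · ∬_Ω |∇f|² dxdy, where C_α = 10⁶/[(α−1)(1−ν)]^{1/α}. (This is the Rayleigh-quotient form of the lower bound for the first nontrivial Neumann eigenvalue μ₁(Ω) of the Laplacian in Theorem A.) -/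
open MeasureTheory Metric Real
open scoped ENNReal NNReal

/-- A `C¹` `K`-quasiconformal homeomorphism of `ℂ` onto itself: a `C¹`
bijection of the plane with everywhere positive Jacobian determinant satisfying
`‖Dφ(z)‖² ≤ K·J(z,φ)` everywhere. -/
def IsC1QCPlane (K : ℝ) (φ : ℂ → ℂ) : Prop :=
  ContDiff ℝ 1 φ ∧ Function.Bijective φ ∧
  ∀ z : ℂ, 0 < (fderiv ℝ φ z).det ∧ ‖fderiv ℝ φ z‖ ^ 2 ≤ K * (fderiv ℝ φ z).det

/-!
Write `Ω = Φ(𝔻)`. Pulling area back by `Φ` gives the measure `m(A) = |Φ(A)|`, and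
`∬_𝔻 ∬_Ω |f(w) - f(Φ z)|² dw dz = ∬_𝔻 ∬_𝔻 |g(x) - g(z)|² dm(x) dz` for `g = f ∘ Φ`, whose Dirichlet
energy on `𝔻` is at most `K` times that of `f` on `Ω`. Averaging `|∇g|²` along the segments from
`x` to `z` bounds this double integral by the energy of `g`, provided the `m`-measure of a disc of
radius `t` is `O(t ^ ε)` for some `ε > 0`; as `f` has mean square oscillation on `Ω` about its mean
no larger than about any constant `f(Φ z)`, the theorem follows.

The growth of `m` comes from the length–area method. Applied to `Φ` itself, it shows that doubling a
disc increases the area of its image by a definite factor, whence the power `t ^ ε` with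
`ε = 1 / (30 K)`. Applied to `log |Φ - Φ(x)|`, suitably smoothed, it shows that the images of points
at comparable distances from `x` lie at comparable distances from `Φ(x)`, so that the image of a
disc has area at most `1024 exp(1200 K)` times that of the concentric disc three times smaller; this
compares `m` of discs sticking out of `𝔻` with `|Ω|`.

The resulting constant `28800 · 1024 · K³ exp(1200 K) / π` is smaller than the one in terms of `α`,
in which `C_α ≥ 5 · 10⁵` and the exponential exceeds `exp(1201 K)`.
-/

open Set Filter Topology Module

section OpenMaps

variable {X Y F : Type*} [MetricSpace X] [ProperSpace X] [MetricSpace Y]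
  [NormedAddCommGroup F] [NormedSpace ℝ F]

lemma exists_mem_sphere_image_closedBall_subset [Nontrivial F] {φ : X → F} (hφ : IsOpenMap φ)
    (hc : Continuous φ) (x : X) (w : F) {r : ℝ} (hr : 0 ≤ r) :
    ∃ q ∈ sphere x r, φ '' closedBall x r ⊆ closedBall w (dist (φ q) w) := by
  obtain ⟨q, hq, hmax⟩ := (isCompact_closedBall x r).exists_isMaxOn
    ⟨x, mem_closedBall_self hr⟩ (hc.dist continuous_const).continuousOn
  have hsub : φ '' closedBall x r ⊆ closedBall w (dist (φ q) w) :=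
    image_subset_iff.2 fun z hz => mem_closedBall.2 (hmax hz)
  refine ⟨q, ?_, hsub⟩
  by_contra hne
  have hq_ball : q ∈ ball x r := lt_of_le_of_ne hq hne
  have hq_int : φ q ∈ interior (closedBall w (dist (φ q) w)) :=
    interior_maximal ((image_mono ball_subset_closedBall).trans hsub) (hφ _ isOpen_ball)
      (mem_image_of_mem φ hq_ball)
  rw [interior_closedBall', mem_ball] at hq_int
  exact lt_irrefl _ hq_int

lemma subset_image_ball_of_isPreconnected {φ : X → Y} (hφ : IsOpenMap φ) (hc : Continuous φ)
    {x : X} {r : ℝ} (hr : 0 < r) {s : Set Y} (hs : IsPreconnected s) (hx : φ x ∈ s)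
    (hdisj : Disjoint (φ '' sphere x r) s) : s ⊆ φ '' ball x r := by
  refine hs.subset_of_closure_inter_subset (hφ _ isOpen_ball)
    ⟨φ x, hx, mem_image_of_mem φ (mem_ball_self hr)⟩ ?_
  rintro y ⟨hy, hys⟩
  have hclosure : closure (φ '' ball x r) ⊆ φ '' closedBall x r :=
    closure_minimal (image_mono ball_subset_closedBall)
      ((isCompact_closedBall x r).image hc).isClosed
  obtain ⟨p, hp, rfl⟩ := hclosure hy
  rw [← ball_union_sphere] at hp
  exact hp.elim (mem_image_of_mem φ)
    fun hp => (hdisj.le_bot ⟨mem_image_of_mem φ hp, hys⟩).elim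

lemma exists_mem_sphere_dist_image_le {φ : X → F} (hφ : IsOpenMap φ) (hc : Continuous φ)
    (hinj : Function.Injective φ) {x b : X} {r : ℝ} (hr : 0 < r) (hb : r ≤ dist b x) :
    ∃ p ∈ sphere x r, dist (φ p) (φ x) ≤ dist (φ b) (φ x) := by
  by_contra! hfar
  have hdisj : Disjoint (φ '' sphere x r) (closedBall (φ x) (dist (φ b) (φ x))) := by
    rw [Set.disjoint_left, forall_mem_image]
    exact fun p hp => not_le.2 (hfar p hp)
  obtain ⟨y, hy, hyb⟩ := subset_image_ball_of_isPreconnected hφ hc hr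
    (convex_closedBall _ _).isPreconnected (mem_closedBall_self dist_nonneg) hdisj
    (mem_closedBall.2 (le_refl (dist (φ b) (φ x))))
  exact hb.not_gt (hinj hyb ▸ hy)

end OpenMaps

section LengthArea

lemma sq_lintegral_mul_le {α : Type*} [MeasurableSpace α] (μ : Measure α) {f g : α → ℝ≥0∞}
    (hf : AEMeasurable f μ) (hg : AEMeasurable g μ) :
    (∫⁻ a, f a * g a ∂μ) ^ 2 ≤ (∫⁻ a, f a ^ 2 ∂μ) * ∫⁻ a, g a ^ 2 ∂μ := by
  have hölder := ENNReal.lintegral_mul_le_Lp_mul_Lq μ Real.HolderConjugate.two_two hf hg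
  simp only [Pi.mul_apply, ENNReal.rpow_two, ← ENNReal.mul_rpow_of_nonneg _ _ one_half_pos.le]
    at hölder
  calc (∫⁻ a, f a * g a ∂μ) ^ 2
      ≤ (((∫⁻ a, f a ^ 2 ∂μ) * ∫⁻ a, g a ^ 2 ∂μ) ^ (1 / 2 : ℝ)) ^ 2 := by gcongr
    _ = (∫⁻ a, f a ^ 2 ∂μ) * ∫⁻ a, g a ^ 2 ∂μ := by
      rw [← ENNReal.rpow_two, ← ENNReal.rpow_mul]
      norm_num

lemma sq_lintegral_le {α : Type*} [MeasurableSpace α] (μ : Measure α) {f : α → ℝ≥0∞}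
    (hf : AEMeasurable f μ) : (∫⁻ a, f a ∂μ) ^ 2 ≤ μ univ * ∫⁻ a, f a ^ 2 ∂μ := by
  simpa using sq_lintegral_mul_le μ (aemeasurable_const (b := 1)) hf

lemma enorm_comp_sub_le_lintegral {E F : Type*} [NormedAddCommGroup E] [NormedSpace ℝ E]
    [NormedAddCommGroup F] [NormedSpace ℝ F] {g : E → F} {U : Set E} (hU : IsOpen U)
    (hg : ContDiffOn ℝ 1 g U) {γ : ℝ → E} (hγ : ContDiff ℝ 1 γ) {a b : ℝ} (hab : a ≤ b)
    (hmaps : MapsTo γ (Icc a b) U) :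
    ‖g (γ a) - g (γ b)‖ₑ ≤ ∫⁻ t in Ioo a b, ‖deriv γ t‖ₑ * ‖fderiv ℝ g (γ t)‖ₑ := by
  rw [← enorm_neg, neg_sub, restrict_Ioo_eq_restrict_Icc]
  refine (enorm_sub_le_lintegral_deriv_of_contDiffOn_Icc
    (hg.comp hγ.contDiffOn hmaps) hab).trans ?_
  refine setLIntegral_mono' measurableSet_Icc fun t ht => ?_
  have hgt : DifferentiableAt ℝ g (γ t) :=
    (hg.contDiffAt (hU.mem_nhds (hmaps ht))).differentiableAt one_ne_zero
  rw [fderiv_comp_deriv t hgt (hγ.differentiable one_ne_zero t), mul_comm]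
  exact ContinuousLinearMap.le_opENorm _ _

variable {F : Type*} [NormedAddCommGroup F] [NormedSpace ℝ F]

lemma enorm_sub_le_lintegral_circleMap {h : ℂ → F} {U : Set ℂ} (hU : IsOpen U)
    (hh : ContDiffOn ℝ 1 h U) {c : ℂ} {t : ℝ} (ht : 0 < t) (hsub : sphere c t ⊆ U) {p q : ℂ}
    (hp : p ∈ sphere c t) (hq : q ∈ sphere c t) :
    ‖h p - h q‖ₑ ≤ ∫⁻ θ in Ioo (-π) π, ENNReal.ofReal t * ‖fderiv ℝ h (circleMap c t θ)‖ₑ := by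
  have arg_param : ∀ p ∈ sphere c t, circleMap c t (p - c).arg = p := fun p hp => by
    rw [circleMap, ← mem_sphere_iff_norm.1 hp, Complex.norm_mul_exp_arg_mul_I, add_sub_cancel]
  wlog hle : (p - c).arg ≤ (q - c).arg generalizing p q
  · rw [← enorm_neg, neg_sub]
    exact this hq hp (le_of_not_ge hle)
  have key := enorm_comp_sub_le_lintegral hU hh (contDiff_circleMap c t) hle
    fun θ _ => hsub (circleMap_mem_sphere c ht.le θ)
  have enorm_I : ‖Complex.I‖ₑ = 1 := by rw [← ofReal_norm, Complex.norm_I, ENNReal.ofReal_one]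
  simp only [deriv_circleMap, enorm_mul, enorm_I, mul_one] at key
  rw [arg_param p hp, arg_param q hq] at key
  refine key.trans ((lintegral_mono_set (Ioo_subset_Ioo (Complex.neg_pi_lt_arg _).le
    (Complex.arg_le_pi _))).trans_eq (lintegral_congr fun θ => ?_))
  rw [← ofReal_norm (circleMap 0 t θ), norm_circleMap_zero, abs_of_pos ht]

lemma lintegral_circleMap (c : ℂ) {T : Set ℝ} (hT : MeasurableSet T) (hT0 : T ⊆ Ioi 0)
    {f : ℂ → ℝ≥0∞} (hf : Measurable f) :
    ∫⁻ t in T, ∫⁻ θ in Ioo (-π) π, ENNReal.ofReal t * f (circleMap c t θ) =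
      ∫⁻ z in (dist · c) ⁻¹' T, f z := by
  have hTm : MeasurableSet ((dist · c) ⁻¹' T) := hT.preimage (by fun_prop)
  have hpolar : ∀ p ∈ polarCoord.target,
      ENNReal.ofReal p.1 • ((dist · c) ⁻¹' T).indicator f (c + Complex.polarCoord.symm p) =
        (T ×ˢ univ).indicator
          (fun p : ℝ × ℝ => ENNReal.ofReal p.1 * f (circleMap c p.1 p.2)) p := by
    rintro ⟨t, θ⟩ ⟨ht, -⟩
    have hsymm : c + Complex.polarCoord.symm (t, θ) = circleMap c t θ := by
      rw [Complex.polarCoord_symm_apply, circleMap, Complex.exp_mul_I,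
        Complex.ofReal_cos, Complex.ofReal_sin]
    have hdist : dist (circleMap c t θ) c = t := circleMap_mem_sphere c (le_of_lt ht) θ
    rw [hsymm]
    by_cases htT : t ∈ T <;> simp [indicator, hdist, htT]
  have hmeas : Measurable fun p : ℝ × ℝ => ENNReal.ofReal p.1 * f (circleMap c p.1 p.2) :=
    (by fun_prop : Measurable fun p : ℝ × ℝ => ENNReal.ofReal p.1).mul
      (hf.comp (by unfold circleMap; fun_prop))
  rw [← lintegral_indicator hTm, ← lintegral_add_left_eq_self _ c,
    ← Complex.lintegral_comp_polarCoord_symm,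
    setLIntegral_congr_fun polarCoord.open_target.measurableSet hpolar,
    setLIntegral_indicator (hT.prod MeasurableSet.univ), polarCoord_target, prod_inter_prod,
    inter_eq_left.2 hT0, univ_inter, Measure.volume_eq_prod, ← Measure.prod_restrict,
    lintegral_prod _ hmeas.aemeasurable]

lemma lintegral_inv_Ioo {r R : ℝ} (hr : 0 < r) (hrR : r ≤ R) :
    ∫⁻ t in Ioo r R, ENNReal.ofReal t⁻¹ = ENNReal.ofReal (log (R / r)) := by
  have hint : IntegrableOn (fun t : ℝ => t⁻¹) (Ioo r R) :=
    ((continuousOn_id.inv₀ fun t ht => (hr.trans_le ht.1).ne').integrableOn_Icc).mono_set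
      Ioo_subset_Icc_self
  rw [← ofReal_integral_eq_lintegral_ofReal hint, ← integral_Ioc_eq_integral_Ioo,
    ← intervalIntegral.integral_of_le hrR, integral_inv_of_pos hr (hr.trans_le hrR)]
  filter_upwards [ae_restrict_mem measurableSet_Ioo] with t ht
  exact inv_nonneg.2 (hr.trans ht.1).le

/-- The Courant–Lebesgue lemma: by Cauchy–Schwarz on the circle of radius `t`, an oscillation of at
least `√D` there costs Dirichlet energy `D / (2πt)` per unit of radius. -/
lemma mul_log_le_lintegral_enorm_fderiv_sq [CompleteSpace F] {h : ℂ → F} {c : ℂ} {r R : ℝ}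
    (hr : 0 < r) (hrR : r ≤ R) (hh : ContDiffOn ℝ 1 h ((dist · c) ⁻¹' Ioo r R)) {D : ℝ≥0∞}
    (hD : ∀ t ∈ Ioo r R, ∃ p ∈ sphere c t, ∃ q ∈ sphere c t, D ≤ ‖h p - h q‖ₑ ^ 2) :
    D * ENNReal.ofReal (log (R / r)) ≤
      ENNReal.ofReal (2 * π) * ∫⁻ z in (dist · c) ⁻¹' Ioo r R, ‖fderiv ℝ h z‖ₑ ^ 2 := by
  have hmeas : Measurable fun z => ‖fderiv ℝ h z‖ₑ := (measurable_fderiv ℝ h).enorm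
  rw [← lintegral_circleMap c measurableSet_Ioo (fun t ht => hr.trans ht.1)
    (hmeas.pow_const 2), ← lintegral_const_mul' _ _ ENNReal.ofReal_ne_top,
    ← lintegral_inv_Ioo hr hrR, ← lintegral_const_mul _ (by fun_prop)]
  refine setLIntegral_mono' measurableSet_Ioo fun t ht => ?_
  have ht0 : 0 < t := hr.trans ht.1
  obtain ⟨p, hp, q, hq, hpq⟩ := hD t ht
  set I : ℝ≥0∞ := ∫⁻ θ in Ioo (-π) π, ‖fderiv ℝ h (circleMap c t θ)‖ₑ ^ 2
  have hlen : ‖h p - h q‖ₑ ≤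
      ENNReal.ofReal t * ∫⁻ θ in Ioo (-π) π, ‖fderiv ℝ h (circleMap c t θ)‖ₑ := by
    rw [← lintegral_const_mul' _ _ ENNReal.ofReal_ne_top]
    exact enorm_sub_le_lintegral_circleMap (isOpen_Ioo.preimage (by fun_prop)) hh ht0
      (fun z hz => by rwa [mem_preimage, mem_sphere.1 hz]) hp hq
  have hCS : (∫⁻ θ in Ioo (-π) π, ‖fderiv ℝ h (circleMap c t θ)‖ₑ) ^ 2 ≤
      ENNReal.ofReal (2 * π) * I := by
    have hmeas' : Measurable fun θ => ‖fderiv ℝ h (circleMap c t θ)‖ₑ :=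
      hmeas.comp (by fun_prop)
    refine (sq_lintegral_le _ hmeas'.aemeasurable).trans_eq ?_
    rw [Measure.restrict_apply_univ, Real.volume_Ioo, sub_neg_eq_add, ← two_mul]
  have hcancel : ENNReal.ofReal t * ENNReal.ofReal t⁻¹ = 1 := by
    rw [← ENNReal.ofReal_mul ht0.le, mul_inv_cancel₀ ht0.ne', ENNReal.ofReal_one]
  calc D * ENNReal.ofReal t⁻¹
      ≤ ENNReal.ofReal t ^ 2 * (ENNReal.ofReal (2 * π) * I) * ENNReal.ofReal t⁻¹ := by
        gcongr
        calc D ≤ ‖h p - h q‖ₑ ^ 2 := hpq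
          _ ≤ _ := pow_le_pow_left₀ (zero_le) hlen 2
          _ ≤ _ := by rw [mul_pow]; gcongr
    _ = ENNReal.ofReal (2 * π) * (ENNReal.ofReal t * I) *
          (ENNReal.ofReal t * ENNReal.ofReal t⁻¹) := by ring
    _ = ENNReal.ofReal (2 * π) * ∫⁻ θ in Ioo (-π) π,
          ENNReal.ofReal t * ‖fderiv ℝ h (circleMap c t θ)‖ₑ ^ 2 := by
        rw [hcancel, mul_one, lintegral_const_mul' _ _ ENNReal.ofReal_ne_top]

end LengthArea

section Growth

lemma abs_det_le_norm_pow_finrank {E : Type*} [NormedAddCommGroup E] [NormedSpace ℝ E]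
    [FiniteDimensional ℝ E] (A : E →L[ℝ] E) : |A.det| ≤ ‖A‖ ^ finrank ℝ E := by
  let _ : MeasurableSpace E := borel E
  have : BorelSpace E := ⟨rfl⟩
  let μ : Measure E := Measure.addHaar
  have hsub : A '' closedBall 0 1 ⊆ closedBall 0 ‖A‖ := by
    rintro _ ⟨v, hv, rfl⟩
    rw [mem_closedBall_zero_iff] at hv ⊢
    exact A.unit_le_opNorm v hv
  have hμ := measure_mono (μ := μ) hsub
  rw [Measure.addHaar_image_continuousLinearMap, Measure.addHaar_closedBall μ 0 zero_le_one,
    Measure.addHaar_closedBall μ 0 (norm_nonneg A), one_pow, ENNReal.ofReal_one, one_mul] at hμ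
  exact (ENNReal.ofReal_le_ofReal_iff (by positivity)).1 <|
    (ENNReal.mul_le_mul_iff_left (measure_ball_pos μ 0 one_pos).ne' measure_ball_lt_top.ne).1 hμ

lemma le_ofReal_rpow_mul_of_mul_le_two_mul {V : ℝ → ℝ≥0∞} (hV : Monotone V) {ε : ℝ} (hε : 0 ≤ ε)
    (hstep : ∀ r, 0 < r → ENNReal.ofReal (2 ^ ε) * V r ≤ V (2 * r)) {t R : ℝ} (ht : 0 < t)
    (ht1 : t ≤ 1) (hR : 0 < R) : V (t * R) ≤ ENNReal.ofReal ((2 * t) ^ ε) * V R := by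
  have hiter : ∀ n : ℕ, ∀ r, 0 < r → ENNReal.ofReal ((2 ^ n) ^ ε) * V r ≤ V (2 ^ n * r) := by
    intro n
    induction n with
    | zero => simp
    | succ n ih =>
      intro r hr
      calc ENNReal.ofReal ((2 ^ (n + 1)) ^ ε) * V r
          = ENNReal.ofReal (2 ^ ε) * (ENNReal.ofReal ((2 ^ n) ^ ε) * V r) := by
            rw [← mul_assoc, ← ENNReal.ofReal_mul (by positivity),
              ← mul_rpow zero_le_two (by positivity), pow_succ']
        _ ≤ ENNReal.ofReal (2 ^ ε) * V (2 ^ n * r) := by gcongr; exact ih r hr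
        _ ≤ V (2 * (2 ^ n * r)) := hstep _ (by positivity)
        _ = V (2 ^ (n + 1) * r) := by rw [pow_succ', mul_assoc]
  obtain ⟨n, hn, hn'⟩ := exists_nat_pow_near ((one_le_inv₀ ht).2 ht1) one_lt_two
  have one_le : 1 ≤ 2 * t * 2 ^ n := by
    have := (inv_lt_iff_one_lt_mul₀ ht).1 hn'
    rw [pow_succ] at this
    linarith
  calc V (t * R) ≤ ENNReal.ofReal ((2 * t * 2 ^ n) ^ ε) * V (t * R) :=
        le_mul_of_one_le_left' (ENNReal.one_le_ofReal.2 (one_le_rpow one_le hε))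
    _ = ENNReal.ofReal ((2 * t) ^ ε) * (ENNReal.ofReal ((2 ^ n) ^ ε) * V (t * R)) := by
        rw [← mul_assoc, ← ENNReal.ofReal_mul (by positivity),
          ← mul_rpow (by positivity) (by positivity)]
    _ ≤ ENNReal.ofReal ((2 * t) ^ ε) * V R := by
        gcongr
        refine (hiter n _ (by positivity)).trans (hV ?_)
        rw [← mul_assoc]
        exact mul_le_of_le_one_left hR.le ((le_inv_mul_iff₀' ht).1 (by rwa [mul_one]))

end Growth

namespace IsC1QCPlane

variable {K : ℝ} {Φ : ℂ → ℂ}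

lemma one_le (h : IsC1QCPlane K Φ) : 1 ≤ K := by
  obtain ⟨hdet, hK⟩ := h.2.2 0
  have hle := abs_det_le_norm_pow_finrank (fderiv ℝ Φ 0)
  rw [abs_of_pos hdet, Complex.finrank_real_complex] at hle
  exact (le_mul_iff_one_le_left hdet).1 (hle.trans hK)

lemma hasFDerivAt (h : IsC1QCPlane K Φ) (z : ℂ) : HasFDerivAt Φ (fderiv ℝ Φ z) z :=
  (h.1.differentiable one_ne_zero z).hasFDerivAt

lemma isOpenMap (h : IsC1QCPlane K Φ) : IsOpenMap Φ := by
  refine isOpenMap_of_hasStrictFDerivAt_equiv (𝕜 := ℝ)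
    (f' := fun z => (fderiv ℝ Φ z).toContinuousLinearEquivOfDetNeZero (h.2.2 z).1.ne') fun z => ?_
  rw [ContinuousLinearMap.coe_toContinuousLinearEquivOfDetNeZero]
  exact h.1.contDiffAt.hasStrictFDerivAt one_ne_zero

lemma measurableEmbedding (h : IsC1QCPlane K Φ) : MeasurableEmbedding Φ :=
  (IsOpenEmbedding.of_continuous_injective_isOpenMap h.1.continuous h.2.1.1
    h.isOpenMap).measurableEmbedding

lemma lintegral_enorm_fderiv_comp_sq_le (h : IsC1QCPlane K Φ) {F : Type*} [NormedAddCommGroup F]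
    [NormedSpace ℝ F] {f : ℂ → F} {s : Set ℂ} (hs : MeasurableSet s)
    (hf : ∀ z ∈ s, DifferentiableAt ℝ f (Φ z)) :
    ∫⁻ z in s, ‖fderiv ℝ (f ∘ Φ) z‖ₑ ^ 2 ≤
      ENNReal.ofReal K * ∫⁻ w in Φ '' s, ‖fderiv ℝ f w‖ₑ ^ 2 := by
  have hdil : ∀ z, ‖fderiv ℝ Φ z‖ₑ ^ 2 ≤
      ENNReal.ofReal K * ENNReal.ofReal |(fderiv ℝ Φ z).det| := fun z => by
    rw [← ofReal_norm, ← ENNReal.ofReal_pow (norm_nonneg _),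
      ← ENNReal.ofReal_mul (zero_le_one.trans h.one_le), abs_of_pos (h.2.2 z).1]
    exact ENNReal.ofReal_le_ofReal (h.2.2 z).2
  rw [lintegral_image_eq_lintegral_abs_det_fderiv_mul volume hs
    (fun z _ => (h.hasFDerivAt z).hasFDerivWithinAt) h.2.1.1.injOn,
    ← lintegral_const_mul' _ _ ENNReal.ofReal_ne_top]
  refine setLIntegral_mono' hs fun z hz => ?_
  rw [fderiv_comp z (hf z hz) (h.hasFDerivAt z).differentiableAt]
  calc ‖(fderiv ℝ f (Φ z)).comp (fderiv ℝ Φ z)‖ₑ ^ 2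
      ≤ (‖fderiv ℝ f (Φ z)‖ₑ * ‖fderiv ℝ Φ z‖ₑ) ^ 2 := by
        gcongr
        exact ContinuousLinearMap.opENorm_comp_le _ _
    _ ≤ ‖fderiv ℝ f (Φ z)‖ₑ ^ 2 * (ENNReal.ofReal K * ENNReal.ofReal |(fderiv ℝ Φ z).det|) := by
        rw [mul_pow]
        gcongr
        exact hdil z
    _ = ENNReal.ofReal K *
          (ENNReal.ofReal |(fderiv ℝ Φ z).det| * ‖fderiv ℝ f (Φ z)‖ₑ ^ 2) := by ring

lemma lintegral_enorm_fderiv_sq_le (h : IsC1QCPlane K Φ) {s : Set ℂ} (hs : MeasurableSet s) :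
    ∫⁻ z in s, ‖fderiv ℝ Φ z‖ₑ ^ 2 ≤ ENNReal.ofReal K * volume (Φ '' s) := by
  have hid : ‖ContinuousLinearMap.id ℝ ℂ‖ₑ = 1 := by
    rw [← ofReal_norm, ContinuousLinearMap.norm_id, ENNReal.ofReal_one]
  simpa [fderiv_id, hid] using h.lintegral_enorm_fderiv_comp_sq_le hs fun z _ => differentiableAt_id

lemma volume_image_closedBall_mul_log_le (h : IsC1QCPlane K Φ) (x : ℂ) {r R : ℝ} (hr : 0 < r)
    (hrR : r ≤ R) :
    volume (Φ '' closedBall x r) * ENNReal.ofReal (log (R / r)) ≤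
      ENNReal.ofReal (2 * π ^ 2 * K) * volume (Φ '' ((dist · x) ⁻¹' Ioo r R)) := by
  have hπ : ENNReal.ofReal π ≠ 0 := by simpa using pi_pos
  have hosc : ∀ t ∈ Ioo r R, ∃ p ∈ sphere x t, ∃ q ∈ sphere x t,
      volume (Φ '' closedBall x r) / ENNReal.ofReal π ≤ ‖Φ p - Φ q‖ₑ ^ 2 := by
    intro t ht
    have ht0 : 0 ≤ t := hr.le.trans ht.1.le
    obtain ⟨p, hp⟩ : (sphere x t).Nonempty := NormedSpace.sphere_nonempty.2 ht0
    obtain ⟨q, hq, hsub⟩ :=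
      exists_mem_sphere_image_closedBall_subset h.isOpenMap h.1.continuous x (Φ p) ht0
    refine ⟨q, hq, p, hp, ENNReal.div_le_of_le_mul ?_⟩
    refine (measure_mono ((image_mono (closedBall_subset_closedBall ht.1.le)).trans hsub)).trans_eq
      ?_
    rw [Complex.volume_closedBall, dist_eq_norm, ofReal_norm, ← NNReal.coe_real_pi,
      ENNReal.ofReal_coe_nnreal]
  have hCL := (mul_log_le_lintegral_enorm_fderiv_sq hr hrR h.1.contDiffOn hosc).trans
    (mul_le_mul_right (h.lintegral_enorm_fderiv_sq_le
      (measurableSet_Ioo.preimage (by fun_prop))) _)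
  calc volume (Φ '' closedBall x r) * ENNReal.ofReal (log (R / r))
      = ENNReal.ofReal π *
          (volume (Φ '' closedBall x r) / ENNReal.ofReal π * ENNReal.ofReal (log (R / r))) := by
        rw [← mul_assoc, ENNReal.mul_div_cancel hπ ENNReal.ofReal_ne_top]
    _ ≤ ENNReal.ofReal π * (ENNReal.ofReal (2 * π) *
          (ENNReal.ofReal K * volume (Φ '' ((dist · x) ⁻¹' Ioo r R)))) := by gcongr
    _ = ENNReal.ofReal (2 * π ^ 2 * K) * volume (Φ '' ((dist · x) ⁻¹' Ioo r R)) := by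
        rw [← mul_assoc, ← mul_assoc, ← ENNReal.ofReal_mul pi_pos.le,
          ← ENNReal.ofReal_mul (by positivity)]
        ring_nf

lemma ofReal_mul_volume_image_closedBall_le_volume_image_annulus (h : IsC1QCPlane K Φ) (x : ℂ)
    {r : ℝ} (hr : 0 < r) :
    ENNReal.ofReal (1 / (30 * K)) * volume (Φ '' closedBall x r) ≤
      volume (Φ '' ((dist · x) ⁻¹' Ioo r (2 * r))) := by
  have hK := h.one_le
  set V := volume (Φ '' closedBall x r)
  set W := volume (Φ '' ((dist · x) ⁻¹' Ioo r (2 * r)))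
  have hlog : V * ENNReal.ofReal (log 2) ≤ ENNReal.ofReal (2 * π ^ 2 * K) * W := by
    have := h.volume_image_closedBall_mul_log_le x hr (show r ≤ 2 * r by linarith)
    rwa [mul_div_cancel_right₀ _ hr.ne'] at this
  have hconst : 2 * π ^ 2 * K * (1 / (30 * K)) ≤ log 2 := by
    have : 2 * π ^ 2 * K * (1 / (30 * K)) = π ^ 2 / 15 := by field_simp; norm_num
    nlinarith [pi_lt_d2, pi_pos, log_two_gt_d9]
  refine (ENNReal.mul_le_mul_iff_right (a := ENNReal.ofReal (log 2))
    (by simpa using log_pos one_lt_two) ENNReal.ofReal_ne_top).1 ?_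
  calc ENNReal.ofReal (log 2) * (ENNReal.ofReal (1 / (30 * K)) * V)
      = ENNReal.ofReal (1 / (30 * K)) * (V * ENNReal.ofReal (log 2)) := by ring
    _ ≤ ENNReal.ofReal (1 / (30 * K)) * (ENNReal.ofReal (2 * π ^ 2 * K) * W) := by gcongr
    _ ≤ ENNReal.ofReal (log 2) * W := by
      rw [← mul_assoc, ← ENNReal.ofReal_mul (by positivity), mul_comm (1 / (30 * K))]
      gcongr

lemma ofReal_mul_volume_image_closedBall_le (h : IsC1QCPlane K Φ) (x : ℂ) {r : ℝ} (hr : 0 < r) :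
    ENNReal.ofReal (2 ^ (1 / (30 * K))) * volume (Φ '' closedBall x r) ≤
      volume (Φ '' closedBall x (2 * r)) := by
  have hK := h.one_le
  set annulus : Set ℂ := (dist · x) ⁻¹' Ioo r (2 * r)
  have hpow : (2 : ℝ) ^ (1 / (30 * K)) ≤ 1 + 1 / (30 * K) := by
    have hle : 1 / (30 * K) ≤ 1 := (div_le_one (by positivity)).2 (by linarith)
    simpa [one_add_one_eq_two] using
      rpow_one_add_le_one_add_mul_self (s := 1) (by norm_num) (by positivity) hle
  have hdisj : Disjoint (Φ '' closedBall x r) (Φ '' annulus) :=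
    (disjoint_image_iff h.2.1.1).2 (Set.disjoint_left.2 fun z hz hz' => hz'.1.not_ge hz)
  calc ENNReal.ofReal (2 ^ (1 / (30 * K))) * volume (Φ '' closedBall x r)
      ≤ ENNReal.ofReal (1 + 1 / (30 * K)) * volume (Φ '' closedBall x r) := by gcongr
    _ = volume (Φ '' closedBall x r) +
          ENNReal.ofReal (1 / (30 * K)) * volume (Φ '' closedBall x r) := by
        rw [ENNReal.ofReal_add zero_le_one (by positivity), ENNReal.ofReal_one, add_mul, one_mul]
    _ ≤ volume (Φ '' closedBall x r) + volume (Φ '' annulus) := by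
        gcongr
        exact h.ofReal_mul_volume_image_closedBall_le_volume_image_annulus x hr
    _ = volume (Φ '' closedBall x r ∪ Φ '' annulus) :=
        (measure_union hdisj (h.measurableEmbedding.measurableSet_image.2
          (measurableSet_Ioo.preimage (by fun_prop)))).symm
    _ ≤ volume (Φ '' closedBall x (2 * r)) := by
        rw [← image_union]
        gcongr
        exact union_subset (closedBall_subset_closedBall (by linarith)) fun z hz => hz.2.le

lemma volume_image_closedBall_le_rpow_mul (h : IsC1QCPlane K Φ) (x : ℂ) {t R : ℝ} (ht : 0 < t)
    (ht1 : t ≤ 1) (hR : 0 < R) :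
    volume (Φ '' closedBall x (t * R)) ≤
      ENNReal.ofReal ((2 * t) ^ (1 / (30 * K))) * volume (Φ '' closedBall x R) := by
  have hK := h.one_le
  exact le_ofReal_rpow_mul_of_mul_le_two_mul (V := fun r => volume (Φ '' closedBall x r))
    (fun r s hrs => by dsimp only; gcongr) (by positivity)
    (fun r hr => h.ofReal_mul_volume_image_closedBall_le x hr) ht ht1 hR

end IsC1QCPlane

section LogCutoff

variable {E : Type*} [NormedAddCommGroup E] {l m : ℝ}

/-- The smooth logarithmic cutoff between the radii `l < m`: up to additive constants it is
`log (l² / m²)` for `‖w‖ ≤ l` and `0` for `‖w‖ ≥ m`. The squares `l²`, `m²` inside the logarithms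
replace the usual truncation of `2 log ‖w‖`, which would not be `C¹`. -/
noncomputable def logCutoff (l m : ℝ) (w : E) : ℝ :=
  log (‖w‖ ^ 2 + l ^ 2) - log (‖w‖ ^ 2 + m ^ 2)

lemma two_mul_log_le_logCutoff_sub (hl : 0 < l) (hm : 0 < m) {v w : E} (hv : ‖v‖ ≤ l)
    (hw : m ≤ ‖w‖) : 2 * log (m / l / 2) ≤ logCutoff l m w - logCutoff l m v := by
  have hv_l : log (‖v‖ ^ 2 + l ^ 2) ≤ log (2 * l ^ 2) :=
    log_le_log (by positivity) (by nlinarith [norm_nonneg v])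
  have hv_m : log (m ^ 2) ≤ log (‖v‖ ^ 2 + m ^ 2) :=
    log_le_log (by positivity) (by nlinarith [norm_nonneg v])
  have hw_lm : log (‖w‖ ^ 2 + m ^ 2) ≤ log (2 * (‖w‖ ^ 2 + l ^ 2)) :=
    log_le_log (by positivity) (by nlinarith)
  rw [log_mul two_ne_zero (by positivity)] at hv_l hw_lm
  rw [log_pow] at hv_l hv_m
  rw [log_div (by positivity) two_ne_zero, log_div hm.ne' hl.ne', logCutoff, logCutoff]
  push_cast at hv_l hv_m
  linarith

variable [InnerProductSpace ℝ E]

lemma contDiff_logCutoff (hl : l ≠ 0) (hm : m ≠ 0) : ContDiff ℝ 1 (logCutoff l m : E → ℝ) :=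
  (((contDiff_norm_sq ℝ).add contDiff_const).log fun w => by positivity).sub
    (((contDiff_norm_sq ℝ).add contDiff_const).log fun w => by positivity)

lemma hasFDerivAt_logCutoff (hl : l ≠ 0) (hm : m ≠ 0) (w : E) :
    HasFDerivAt (logCutoff l m)
      ((2 * (m ^ 2 - l ^ 2) / ((‖w‖ ^ 2 + l ^ 2) * (‖w‖ ^ 2 + m ^ 2))) • innerSL ℝ w) w := by
  have hsq : HasFDerivAt (fun w : E => ‖w‖ ^ 2) (2 • innerSL ℝ w) w :=
    (hasStrictFDerivAt_norm_sq w).hasFDerivAt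
  have hl' : ‖w‖ ^ 2 + l ^ 2 ≠ 0 := by positivity
  have hm' : ‖w‖ ^ 2 + m ^ 2 ≠ 0 := by positivity
  refine (((hsq.add_const (l ^ 2)).log hl').sub ((hsq.add_const (m ^ 2)).log hm')).congr_fderiv ?_
  rw [← sub_smul, ← Nat.cast_smul_eq_nsmul ℝ, smul_smul]
  congr 1
  field_simp
  push_cast
  ring

lemma sq_norm_fderiv_logCutoff_le (hl : 0 < l) (hlm : l ≤ m) (w : E) :
    ‖fderiv ℝ (logCutoff l m) w‖ ^ 2 ≤
      4 * (m ^ 2 - l ^ 2) / ((‖w‖ ^ 2 + l ^ 2) * (‖w‖ ^ 2 + m ^ 2)) := by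
  have hm : 0 < m := hl.trans_le hlm
  have hml : 0 ≤ m ^ 2 - l ^ 2 := sub_nonneg.2 (by gcongr)
  rw [(hasFDerivAt_logCutoff hl.ne' hm.ne' w).fderiv, norm_smul, innerSL_apply_norm,
    Real.norm_of_nonneg (by positivity)]
  set P := (‖w‖ ^ 2 + l ^ 2) * (‖w‖ ^ 2 + m ^ 2) with hP
  have hP0 : 0 < P := by positivity
  have hle : (m ^ 2 - l ^ 2) * ‖w‖ ^ 2 / P ≤ 1 := by
    rw [div_le_one hP0, hP]
    nlinarith [sq_nonneg ‖w‖, sq_nonneg (‖w‖ * l), sq_nonneg (m * l), sq_nonneg (‖w‖ ^ 2)]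
  calc (2 * (m ^ 2 - l ^ 2) / P * ‖w‖) ^ 2
      = 4 * (m ^ 2 - l ^ 2) / P * ((m ^ 2 - l ^ 2) * ‖w‖ ^ 2 / P) := by field_simp; ring
    _ ≤ 4 * (m ^ 2 - l ^ 2) / P := mul_le_of_le_one_right (by positivity) hle

lemma tendsto_logCutoff_atTop (l m : ℝ) : Tendsto (logCutoff l m : ℝ → ℝ) atTop (𝓝 0) := by
  have hsq : Tendsto (fun s : ℝ => s ^ 2) atTop atTop := tendsto_pow_atTop two_ne_zero
  have hlim := ((tendsto_log_comp_add_sub_log (l ^ 2)).comp hsq).sub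
    ((tendsto_log_comp_add_sub_log (m ^ 2)).comp hsq)
  rw [sub_zero] at hlim
  refine hlim.congr fun s => ?_
  simp [logCutoff]

/-- The density is `2 / s` times the derivative of the radial profile of `logCutoff l m`, so in
polar coordinates its integral telescopes. -/
lemma integrable_and_integral_logCutoff_density (hl : 0 < l) (hlm : l ≤ m) :
    Integrable (fun w : ℂ => 4 * (m ^ 2 - l ^ 2) / ((‖w‖ ^ 2 + l ^ 2) * (‖w‖ ^ 2 + m ^ 2))) ∧
      ∫ w : ℂ, 4 * (m ^ 2 - l ^ 2) / ((‖w‖ ^ 2 + l ^ 2) * (‖w‖ ^ 2 + m ^ 2)) =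
        8 * π * log (m / l) := by
  have hm : 0 < m := hl.trans_le hlm
  have hml : 0 ≤ m ^ 2 - l ^ 2 := sub_nonneg.2 (by gcongr)
  set q : ℝ → ℝ := fun s => 4 * (m ^ 2 - l ^ 2) / ((s ^ 2 + l ^ 2) * (s ^ 2 + m ^ 2)) with hq
  have hderiv : ∀ s : ℝ, HasDerivAt (fun s => 2 * logCutoff l m s) (s * q s) s := fun s => by
    refine ((hasFDerivAt_logCutoff hl.ne' hm.ne' s).hasDerivAt.const_mul 2).congr_deriv ?_
    simp [hq]
    ring
  have hcont : ContinuousWithinAt (fun s : ℝ => 2 * logCutoff l m s) (Ici 0) 0 :=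
    (hderiv 0).continuousAt.continuousWithinAt
  have hnonneg : ∀ s ∈ Ioi (0 : ℝ), 0 ≤ s * q s := fun s (hs : 0 < s) => by
    simp only [hq]
    positivity
  have hlim : Tendsto (fun s : ℝ => 2 * logCutoff l m s) atTop (𝓝 0) := by
    simpa using (tendsto_logCutoff_atTop l m).const_mul 2
  have hint : IntegrableOn (fun s => s * q s) (Ioi 0) :=
    integrableOn_Ioi_deriv_of_nonneg hcont (fun s _ => hderiv s) hnonneg hlim
  have hval : ∫ s in Ioi 0, s * q s = 4 * log (m / l) := by
    rw [integral_Ioi_of_hasDerivAt_of_nonneg hcont (fun s _ => hderiv s) hnonneg hlim,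
      log_div hm.ne' hl.ne']
    simp [logCutoff]
    ring
  have hball : volume.real (ball (0 : ℂ) 1) = π := by simp [Measure.real, Complex.volume_ball]
  constructor
  · refine (integrable_fun_norm_addHaar volume (f := q)).2 ?_
    simpa using hint
  · refine (integral_fun_norm_addHaar volume q).trans ?_
    simp only [Complex.finrank_real_complex, smul_eq_mul, Nat.add_one_sub_one, pow_one, hball, hval,
      nsmul_eq_mul]
    push_cast
    ring

lemma lintegral_enorm_fderiv_logCutoff_sq_le (hl : 0 < l) (hlm : l ≤ m) :
    ∫⁻ w : ℂ, ‖fderiv ℝ (logCutoff l m) w‖ₑ ^ 2 ≤ ENNReal.ofReal (8 * π * log (m / l)) := by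
  have hml : 0 ≤ m ^ 2 - l ^ 2 := sub_nonneg.2 (by gcongr)
  have hm : 0 < m := hl.trans_le hlm
  obtain ⟨hint, hval⟩ := integrable_and_integral_logCutoff_density hl hlm
  rw [← hval,
    ofReal_integral_eq_lintegral_ofReal hint (Eventually.of_forall fun w => by positivity)]
  refine lintegral_mono fun w => ?_
  rw [← ofReal_norm, ← ENNReal.ofReal_pow (norm_nonneg _)]
  exact ENNReal.ofReal_le_ofReal (sq_norm_fderiv_logCutoff_le hl hlm w)

end LogCutoff

namespace IsC1QCPlane

variable {K : ℝ} {Φ : ℂ → ℂ}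

lemma setLIntegral_enorm_fderiv_logCutoff_comp_sq_le (h : IsC1QCPlane K Φ) {l m : ℝ} (hl : 0 < l)
    (hlm : l ≤ m) (c : ℂ) {s : Set ℂ} (hs : MeasurableSet s) :
    ∫⁻ z in s, ‖fderiv ℝ ((fun w => logCutoff l m (w - c)) ∘ Φ) z‖ₑ ^ 2 ≤
      ENNReal.ofReal K * ENNReal.ofReal (8 * π * log (m / l)) := by
  have hdiff : Differentiable ℝ fun w : ℂ => logCutoff l m (w - c) :=
    ((contDiff_logCutoff hl.ne' (hl.trans_le hlm).ne').differentiable one_ne_zero).comp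
      (differentiable_id.sub_const c)
  refine (h.lintegral_enorm_fderiv_comp_sq_le hs fun z _ => hdiff (Φ z)).trans ?_
  gcongr
  refine (setLIntegral_le_lintegral _ _).trans ?_
  simp only [fderiv_comp_sub]
  rw [lintegral_sub_right_eq_self fun w => ‖fderiv ℝ (logCutoff l m) w‖ₑ ^ 2]
  exact lintegral_enorm_fderiv_logCutoff_sq_le hl hlm

/-- On every circle about `x` of radius between `dist a x` and `dist b x`, the cutoff between the
radii `dist (Φ b) (Φ x)` and `dist (Φ a) (Φ x)` has logarithmically large oscillation. Squared, this
beats the cutoff's energy, which is also only logarithmic. -/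
lemma sq_log_mul_log_le (h : IsC1QCPlane K Φ) {x a b : ℂ} (hb : b ≠ x) (hab : dist a x ≤ dist b x)
    (hq : 2 * dist (Φ b) (Φ x) ≤ dist (Φ a) (Φ x)) :
    log (dist (Φ a) (Φ x) / dist (Φ b) (Φ x) / 2) ^ 2 * log (dist b x / dist a x) ≤
      4 * π ^ 2 * K * log (dist (Φ a) (Φ x) / dist (Φ b) (Φ x)) := by
  have hK := h.one_le
  have hl : 0 < dist (Φ b) (Φ x) := dist_pos.2 (h.2.1.1.ne hb)
  set l := dist (Φ b) (Φ x)
  set m := dist (Φ a) (Φ x) with hm_def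
  have hm : 0 < m := by linarith
  have ha : 0 < dist a x := dist_pos.2 fun hax => hm.ne' (by simp [hm_def, hax])
  have hquot : 2 ≤ m / l := (le_div_iff₀ hl).2 hq
  set u : ℂ → ℝ := fun w => logCutoff l m (w - Φ x)
  have hu : ContDiff ℝ 1 u :=
    (contDiff_logCutoff hl.ne' hm.ne').comp (contDiff_id.sub contDiff_const)
  have hosc : ∀ t ∈ Ioo (dist a x) (dist b x), ∃ p ∈ sphere x t, ∃ q ∈ sphere x t,
      ENNReal.ofReal ((2 * log (m / l / 2)) ^ 2) ≤ ‖(u ∘ Φ) p - (u ∘ Φ) q‖ₑ ^ 2 := by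
    intro t ht
    have ht0 : 0 < t := ha.trans ht.1
    obtain ⟨p, hp, hfar⟩ :=
      exists_mem_sphere_image_closedBall_subset h.isOpenMap h.1.continuous x (Φ x) ht0.le
    obtain ⟨q, hq, hnear⟩ :=
      exists_mem_sphere_dist_image_le h.isOpenMap h.1.continuous h.2.1.1 ht0 ht.2.le
    have hmp : m ≤ dist (Φ p) (Φ x) := hfar (mem_image_of_mem Φ (mem_closedBall.2 ht.1.le))
    rw [dist_eq_norm] at hmp hnear
    refine ⟨p, hp, q, hq, ?_⟩
    rw [← ofReal_norm, ← ENNReal.ofReal_pow (norm_nonneg _)]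
    exact ENNReal.ofReal_le_ofReal <| pow_le_pow_left₀
      (mul_nonneg zero_le_two (log_nonneg (by linarith)))
      ((two_mul_log_le_logCutoff_sub hl hm hnear hmp).trans (le_abs_self _)) 2
  have hCL := (mul_log_le_lintegral_enorm_fderiv_sq ha hab (hu.comp h.1).contDiffOn hosc).trans
    (mul_le_mul_right (h.setLIntegral_enorm_fderiv_logCutoff_comp_sq_le hl (by linarith) (Φ x)
      (measurableSet_Ioo.preimage (by fun_prop))) _)
  have hlog : 0 ≤ log (m / l) := log_nonneg (by linarith)
  rw [← ENNReal.ofReal_mul (by positivity), ← ENNReal.ofReal_mul (by positivity),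
    ← ENNReal.ofReal_mul (by positivity), ENNReal.ofReal_le_ofReal_iff (by positivity)] at hCL
  linarith

lemma dist_image_le_of_two_mul_dist_le (h : IsC1QCPlane K Φ) {x a b : ℂ}
    (hab : 2 * dist a x ≤ dist b x) :
    dist (Φ a) (Φ x) ≤ exp (100 * K) * dist (Φ b) (Φ x) := by
  have hK := h.one_le
  rcases eq_or_ne a x with rfl | ha
  · rw [dist_self]
    positivity
  have ha0 : 0 < dist a x := dist_pos.2 ha
  have hb : b ≠ x := dist_pos.1 (by linarith)
  have hl : 0 < dist (Φ b) (Φ x) := dist_pos.2 (h.2.1.1.ne hb)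
  by_contra! hlarge
  set q := dist (Φ a) (Φ x) / dist (Φ b) (Φ x)
  have hexp : exp (100 * K) < q := (lt_div_iff₀ hl).2 hlarge
  have hq2 : 2 ≤ q := by linarith [add_one_le_exp (100 * K)]
  have hlogq : 100 * K < log q := (lt_log_iff_exp_lt (by linarith)).2 hexp
  have hlog_half : log (q / 2) = log q - log 2 := log_div (by linarith) two_ne_zero
  have hlog_ratio : log 2 ≤ log (dist b x / dist a x) :=
    log_le_log two_pos ((le_div_iff₀ ha0).2 hab)
  have hπ : π ^ 2 ≤ 10 := by nlinarith [pi_lt_d2, pi_pos]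
  have hlog2 := log_two_gt_d9
  have hlog2' := log_two_lt_d9
  have hlower : (0.9 * log q) ^ 2 * 0.69 ≤ log (q / 2) ^ 2 * log (dist b x / dist a x) := by
    gcongr <;> linarith
  have hupper : 4 * π ^ 2 * K * log q ≤ 40 * K * log q := by
    gcongr
    · linarith
    · linarith
  have hchain := (hlower.trans (h.sq_log_mul_log_le hb (by linarith)
    ((le_div_iff₀ hl).1 hq2))).trans hupper
  nlinarith

lemma dist_image_lineMap_pow_le (h : IsC1QCPlane K Φ) (x b : ℂ) (n : ℕ) :
    dist (Φ (AffineMap.lineMap x b ((3 / 2 : ℝ) ^ n))) (Φ x) ≤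
      (1 + exp (100 * K)) ^ n * dist (Φ b) (Φ x) := by
  induction n with
  | zero => simp
  | succ n ih =>
    set c := AffineMap.lineMap x b ((3 / 2 : ℝ) ^ n)
    set c' := AffineMap.lineMap x b ((3 / 2 : ℝ) ^ (n + 1))
    have hstep : dist (Φ c') (Φ c) ≤ exp (100 * K) * dist (Φ c) (Φ x) := by
      rw [dist_comm (Φ c) (Φ x)]
      refine h.dist_image_le_of_two_mul_dist_le ?_
      have hpow : (0 : ℝ) < (3 / 2) ^ n := by positivity
      rw [dist_lineMap_lineMap, dist_left_lineMap, Real.dist_eq, pow_succ,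
        Real.norm_of_nonneg hpow.le, abs_of_nonneg (by linarith)]
      exact le_of_eq (by ring)
    calc dist (Φ c') (Φ x) ≤ dist (Φ c') (Φ c) + dist (Φ c) (Φ x) := dist_triangle _ _ _
      _ ≤ (1 + exp (100 * K)) * dist (Φ c) (Φ x) := by linarith
      _ ≤ (1 + exp (100 * K)) * ((1 + exp (100 * K)) ^ n * dist (Φ b) (Φ x)) := by gcongr
      _ = (1 + exp (100 * K)) ^ (n + 1) * dist (Φ b) (Φ x) := by ring

lemma dist_image_le_of_dist_le_pow_mul (h : IsC1QCPlane K Φ) {x a b : ℂ} (n : ℕ)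
    (hab : 2 * dist a x ≤ (3 / 2) ^ n * dist b x) :
    dist (Φ a) (Φ x) ≤
      exp (100 * K) * (1 + exp (100 * K)) ^ n * dist (Φ b) (Φ x) := by
  rw [mul_assoc]
  refine (h.dist_image_le_of_two_mul_dist_le
    (b := AffineMap.lineMap x b ((3 / 2 : ℝ) ^ n)) ?_).trans ?_
  · rwa [dist_lineMap_left, Real.norm_of_nonneg (by positivity), dist_comm x b]
  · gcongr
    exact h.dist_image_lineMap_pow_le x b n

lemma volume_image_closedBall_three_mul_le (h : IsC1QCPlane K Φ) (x : ℂ) {r : ℝ} (hr : 0 < r) :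
    volume (Φ '' closedBall x (3 * r)) ≤
      ENNReal.ofReal (1024 * exp (1200 * K)) * volume (Φ '' ball x r) := by
  obtain ⟨b, hb, hmin⟩ := (isCompact_sphere x r).exists_isMinOn
    (NormedSpace.sphere_nonempty.2 hr.le) (h.1.continuous.dist continuous_const).continuousOn
  set ρ := dist (Φ b) (Φ x)
  have hρ : 0 < ρ := dist_pos.2 (h.2.1.1.ne (ne_of_mem_sphere hb hr.ne'))
  set E := exp (100 * K)
  have hE : 1 ≤ E := one_le_exp (by linarith [h.one_le])
  have hinner : ball (Φ x) ρ ⊆ Φ '' ball x r := by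
    refine subset_image_ball_of_isPreconnected h.isOpenMap h.1.continuous hr
      (convex_ball _ _).isPreconnected (mem_ball_self hρ) ?_
    rw [Set.disjoint_left, forall_mem_image]
    exact fun p hp hpb => (hmin hp).not_gt (mem_ball.1 hpb)
  have houter : Φ '' closedBall x (3 * r) ⊆ closedBall (Φ x) (32 * E ^ 6 * ρ) := by
    rintro _ ⟨a, ha, rfl⟩
    refine (h.dist_image_le_of_dist_le_pow_mul (b := b) 5 ?_).trans ?_
    · rw [mem_sphere.1 hb]
      linarith [mem_closedBall.1 ha]
    · refine mul_le_mul_of_nonneg_right ?_ hρ.le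
      calc E * (1 + E) ^ 5 ≤ E * (E + E) ^ 5 := by gcongr
        _ = 32 * E ^ 6 := by ring
  have hE12 : E ^ 12 = exp (1200 * K) := by
    rw [← exp_nat_mul]
    ring_nf
  calc volume (Φ '' closedBall x (3 * r))
      ≤ volume (closedBall (Φ x) (32 * E ^ 6 * ρ)) := measure_mono houter
    _ = ENNReal.ofReal (1024 * exp (1200 * K)) * volume (ball (Φ x) ρ) := by
      rw [Complex.volume_closedBall, Complex.volume_ball, ← mul_assoc,
        ← ENNReal.ofReal_pow (by positivity), ← ENNReal.ofReal_pow hρ.le,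
        ← ENNReal.ofReal_mul (by positivity), ← hE12]
      ring_nf
    _ ≤ ENNReal.ofReal (1024 * exp (1200 * K)) * volume (Φ '' ball x r) := by gcongr

end IsC1QCPlane

section SegmentAverage

lemma lintegral_rpow_sub_one_Ioo {δ : ℝ} (hδ : 0 < δ) :
    ∫⁻ t in Ioo (0 : ℝ) 1, ENNReal.ofReal (t ^ (δ - 1)) = ENNReal.ofReal δ⁻¹ := by
  have hint : IntegrableOn (fun t : ℝ => t ^ (δ - 1)) (Ioo 0 1) :=
    (intervalIntegrable_iff_integrableOn_Ioo_of_le zero_le_one).1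
      (intervalIntegral.intervalIntegrable_rpow' (by linarith))
  rw [← ofReal_integral_eq_lintegral_ofReal hint, ← integral_Ioc_eq_integral_Ioo,
    ← intervalIntegral.integral_of_le zero_le_one, integral_rpow (Or.inl (by linarith))]
  · simp [hδ.ne']
  · filter_upwards [ae_restrict_mem measurableSet_Ioo] with t ht
    exact rpow_nonneg ht.1.le _

lemma sq_lintegral_Ioo_le {φ : ℝ → ℝ≥0∞} (hφ : Measurable φ) {δ : ℝ} (hδ : 0 < δ) :
    (∫⁻ t in Ioo 0 1, φ t) ^ 2 ≤
      ENNReal.ofReal δ⁻¹ * ∫⁻ t in Ioo 0 1, ENNReal.ofReal (t ^ (1 - δ)) * φ t ^ 2 := by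
  have hsq : ∀ β : ℝ, ∀ t ∈ Ioo (0 : ℝ) 1,
      ENNReal.ofReal (t ^ (β / 2)) ^ 2 = ENNReal.ofReal (t ^ β) := fun β t ht => by
    rw [← ENNReal.ofReal_pow (rpow_nonneg ht.1.le _), ← rpow_mul_natCast ht.1.le]
    norm_num
  have hcancel : ∀ t ∈ Ioo (0 : ℝ) 1,
      φ t = ENNReal.ofReal (t ^ ((δ - 1) / 2)) * (ENNReal.ofReal (t ^ ((1 - δ) / 2)) * φ t) := by
    intro t ht
    rw [← mul_assoc, ← ENNReal.ofReal_mul (rpow_nonneg ht.1.le _), ← rpow_add ht.1,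
      show (δ - 1) / 2 + (1 - δ) / 2 = 0 by ring, rpow_zero, ENNReal.ofReal_one, one_mul]
  rw [setLIntegral_congr_fun measurableSet_Ioo hcancel]
  refine (sq_lintegral_mul_le _ (by fun_prop) (by fun_prop)).trans_eq ?_
  rw [setLIntegral_congr_fun measurableSet_Ioo (hsq (δ - 1)), lintegral_rpow_sub_one_Ioo hδ]
  congr 1
  refine setLIntegral_congr_fun measurableSet_Ioo fun t ht => ?_
  simp only [mul_pow, hsq _ t ht]

lemma lintegral_lintegral_lintegral_swap {α β γ : Type*} [MeasurableSpace α] [MeasurableSpace β]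
    [MeasurableSpace γ] (μ : Measure α) (ν : Measure β) (ρ : Measure γ) [SFinite μ] [SFinite ν]
    [SFinite ρ] {f : α → β → γ → ℝ≥0∞} (hf : Measurable fun p : α × β × γ => f p.1 p.2.1 p.2.2) :
    ∫⁻ a, ∫⁻ b, ∫⁻ c, f a b c ∂ρ ∂ν ∂μ = ∫⁻ c, ∫⁻ a, ∫⁻ b, f a b c ∂ν ∂μ ∂ρ := by
  have hslice : ∀ a, Measurable fun p : β × γ => f a p.1 p.2 := fun a =>
    hf.comp measurable_prodMk_left
  have hinner : Measurable fun p : α × γ => ∫⁻ b, f p.1 b p.2 ∂ν :=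
    Measurable.lintegral_prod_right' (f := fun p : (α × γ) × β => f p.1.1 p.2 p.1.2)
      (hf.comp (by fun_prop : Measurable fun p : (α × γ) × β => (p.1.1, p.2, p.1.2)))
  simp only [fun a => lintegral_lintegral_swap (μ := ν) (ν := ρ) (hslice a).aemeasurable]
  exact lintegral_lintegral_swap hinner.aemeasurable

variable {E F : Type*} [NormedAddCommGroup E] [NormedSpace ℝ E] [MeasurableSpace E] [BorelSpace E]
  [NormedAddCommGroup F] [NormedSpace ℝ F]

lemma sq_enorm_sub_le_lintegral_segment [CompleteSpace F] {g : E → F} {s : Set E} (hs : IsOpen s)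
    (hconv : Convex ℝ s) (hg : ContDiffOn ℝ 1 g s) {x z : E} (hx : x ∈ s) (hz : z ∈ s) {δ : ℝ}
    (hδ : 0 < δ) :
    ‖g x - g z‖ₑ ^ 2 ≤ ‖z - x‖ₑ ^ 2 * (ENNReal.ofReal δ⁻¹ * ∫⁻ t in Ioo (0 : ℝ) 1,
      ENNReal.ofReal (t ^ (1 - δ)) * ‖fderiv ℝ g (x + t • (z - x))‖ₑ ^ 2) := by
  have hlen : ‖g x - g z‖ₑ ≤
      ‖z - x‖ₑ * ∫⁻ t in Ioo (0 : ℝ) 1, ‖fderiv ℝ g (x + t • (z - x))‖ₑ := by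
    have key := enorm_comp_sub_le_lintegral (γ := fun t : ℝ => x + t • (z - x)) hs hg (by fun_prop)
      zero_le_one fun t ht => hconv.add_smul_sub_mem hx hz ht
    have hderiv : ∀ t : ℝ, deriv (fun t : ℝ => x + t • (z - x)) t = z - x := fun t => by
      simpa using (((hasDerivAt_id t).smul_const (z - x)).const_add x).deriv
    simpa [hderiv, lintegral_const_mul' _ _ enorm_ne_top] using key
  have hmeas : Measurable fun t : ℝ => ‖fderiv ℝ g (x + t • (z - x))‖ₑ :=
    (measurable_fderiv ℝ g).enorm.comp
      (by fun_prop : Continuous fun t : ℝ => x + t • (z - x)).measurable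
  calc ‖g x - g z‖ₑ ^ 2
      ≤ (‖z - x‖ₑ * ∫⁻ t in Ioo (0 : ℝ) 1, ‖fderiv ℝ g (x + t • (z - x))‖ₑ) ^ 2 := by gcongr
    _ ≤ _ := by
      rw [mul_pow]
      gcongr
      exact sq_lintegral_Ioo_le hmeas hδ

lemma lintegral_lintegral_closedBall {X : Type*} [PseudoMetricSpace X] [MeasurableSpace X]
    [SecondCountableTopology X] [OpensMeasurableSpace X] (μ ν : Measure X) [SFinite μ] [SFinite ν]
    {f : X → ℝ≥0∞} (hf : Measurable f) (r : ℝ) :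
    ∫⁻ x, ∫⁻ w in closedBall x r, f w ∂μ ∂ν = ∫⁻ w, ν (closedBall w r) * f w ∂μ := by
  have hind : ∀ x w, (closedBall x r).indicator f w = (closedBall w r).indicator (fun _ => f w) x :=
    fun x w => by simp [indicator, dist_comm]
  have hmeas : Measurable fun p : X × X => (closedBall p.1 r).indicator f p.2 :=
    (hf.comp measurable_snd).indicator
      (measurableSet_le (by fun_prop : Measurable fun p : X × X => dist p.2 p.1) measurable_const)
  simp only [← lintegral_indicator measurableSet_closedBall]
  rw [lintegral_lintegral_swap hmeas.aemeasurable]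
  simp [hind, lintegral_indicator_const measurableSet_closedBall, mul_comm]

variable [FiniteDimensional ℝ E] (μ ν : Measure E) [μ.IsAddHaarMeasure] [SFinite ν]

lemma lintegral_comp_add_smul_sub {f : E → ℝ≥0∞} (hf : Measurable f) (x : E) {t : ℝ}
    (ht : 0 < t) :
    ∫⁻ z, f (x + t • (z - x)) ∂μ = ENNReal.ofReal (t ^ finrank ℝ E)⁻¹ * ∫⁻ w, f w ∂μ := by
  rw [lintegral_sub_right_eq_self (fun z => f (x + t • z)) x,
    ← lintegral_map (f := fun z => f (x + z)) (g := (t • ·)) (by fun_prop) (by fun_prop),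
    Measure.map_addHaar_smul _ ht.ne', lintegral_smul_measure, lintegral_add_left_eq_self,
    abs_of_pos (by positivity), smul_eq_mul]

lemma lintegral_lintegral_comp_add_smul_sub_le {s : Set E} (hs : MeasurableSet s)
    (hconv : Convex ℝ s) {d : ℝ} (hd : ∀ x ∈ s, ∀ z ∈ s, dist x z ≤ d) {t : ℝ} (ht : t ∈ Ioo 0 1)
    {M : ℝ≥0∞} (hM : ∀ w ∈ s, ν (closedBall w (t * d)) ≤ M) {f : E → ℝ≥0∞} (hf : Measurable f) :
    ∫⁻ z in s, ∫⁻ x in s, f (x + t • (z - x)) ∂ν ∂μ ≤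
      ENNReal.ofReal (t ^ finrank ℝ E)⁻¹ * (M * ∫⁻ w in s, f w ∂μ) := by
  have hscale : ∀ x ∈ s, ∫⁻ z in s, f (x + t • (z - x)) ∂μ ≤
      ENNReal.ofReal (t ^ finrank ℝ E)⁻¹ * ∫⁻ w in closedBall x (t * d), f w ∂μ.restrict s := by
    intro x hx
    have hT : MeasurableSet (closedBall x (t * d) ∩ s) := measurableSet_closedBall.inter hs
    rw [Measure.restrict_restrict measurableSet_closedBall, ← lintegral_indicator hT,
      ← lintegral_comp_add_smul_sub μ (hf.indicator hT) x ht.1]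
    refine (setLIntegral_mono' hs fun z hz => ?_).trans (setLIntegral_le_lintegral s _)
    rw [indicator_of_mem]
    refine ⟨?_, hconv.add_smul_sub_mem hx hz (Ioo_subset_Icc_self ht)⟩
    rw [mem_closedBall, dist_eq_norm, add_sub_cancel_left, norm_smul,
      Real.norm_of_nonneg ht.1.le, ← dist_eq_norm]
    exact mul_le_mul_of_nonneg_left (hd z hz x hx) ht.1.le
  rw [lintegral_lintegral_swap (by fun_prop)]
  refine (setLIntegral_mono' hs hscale).trans ?_
  rw [lintegral_const_mul' _ _ ENNReal.ofReal_ne_top, lintegral_lintegral_closedBall _ _ hf,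
    ← lintegral_const_mul _ hf]
  refine mul_le_mul_right (setLIntegral_mono' hs fun w hw => mul_le_mul_left ?_ _) _
  exact (Measure.restrict_apply_le _ _).trans (hM w hw)

lemma lintegral_rpow_mul_lintegral_lintegral_comp_add_smul_sub_le {s : Set E}
    (hs : MeasurableSet s) (hconv : Convex ℝ s) {d : ℝ} (hd : ∀ x ∈ s, ∀ z ∈ s, dist x z ≤ d)
    {δ ε : ℝ} (hδε : δ < ε) {A : ℝ≥0∞} (hA : ∀ w ∈ s, ∀ t ∈ Ioo (0 : ℝ) 1,
      ν (closedBall w (t * d)) ≤ A * ENNReal.ofReal (t ^ (finrank ℝ E - 2 + ε)))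
    {f : E → ℝ≥0∞} (hf : Measurable f) :
    ∫⁻ t in Ioo (0 : ℝ) 1, ENNReal.ofReal (t ^ (1 - δ)) *
        ∫⁻ z in s, ∫⁻ x in s, f (x + t • (z - x)) ∂ν ∂μ ≤
      ENNReal.ofReal (ε - δ)⁻¹ * (A * ∫⁻ w in s, f w ∂μ) := by
  rw [← lintegral_rpow_sub_one_Ioo (sub_pos.2 hδε), ← lintegral_mul_const _ (by fun_prop)]
  refine setLIntegral_mono' measurableSet_Ioo fun t ht => ?_
  have hpow : ENNReal.ofReal (t ^ (1 - δ)) * (ENNReal.ofReal (t ^ finrank ℝ E)⁻¹ *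
      ENNReal.ofReal (t ^ (finrank ℝ E - 2 + ε))) = ENNReal.ofReal (t ^ (ε - δ - 1)) := by
    rw [← ENNReal.ofReal_mul (by have := ht.1; positivity),
      ← ENNReal.ofReal_mul (rpow_nonneg ht.1.le _), ← rpow_natCast, ← rpow_neg ht.1.le,
      ← rpow_add ht.1, ← rpow_add ht.1]
    ring_nf
  calc ENNReal.ofReal (t ^ (1 - δ)) * ∫⁻ z in s, ∫⁻ x in s, f (x + t • (z - x)) ∂ν ∂μ
      ≤ ENNReal.ofReal (t ^ (1 - δ)) * (ENNReal.ofReal (t ^ finrank ℝ E)⁻¹ *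
          (A * ENNReal.ofReal (t ^ (finrank ℝ E - 2 + ε)) * ∫⁻ w in s, f w ∂μ)) := by
        gcongr
        exact lintegral_lintegral_comp_add_smul_sub_le μ ν hs hconv hd ht
          (fun w hw => hA w hw t ht) hf
    _ = ENNReal.ofReal (t ^ (ε - δ - 1)) * (A * ∫⁻ w in s, f w ∂μ) := by
        rw [← hpow]
        ring

/-- The substitution `w = x + t • (z - x)` along the segment from `x` to `z` costs `t⁻ⁿ` and
confines `x` to `closedBall w (t * d)`, so a `ν`-growth better than `t ^ (n - 2)` is enough once the
weighted Cauchy–Schwarz inequality in `t` has contributed its factor `t ^ (1 - ε / 2)`. -/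
lemma lintegral_lintegral_sq_enorm_sub_le [CompleteSpace F] {s : Set E} (hs : IsOpen s)
    (hconv : Convex ℝ s) {d : ℝ} (hd : ∀ x ∈ s, ∀ z ∈ s, dist x z ≤ d) {ε : ℝ} (hε : 0 < ε)
    {A : ℝ≥0∞} (hA : ∀ w ∈ s, ∀ t ∈ Ioo (0 : ℝ) 1,
      ν (closedBall w (t * d)) ≤ A * ENNReal.ofReal (t ^ (finrank ℝ E - 2 + ε)))
    {g : E → F} (hg : ContDiffOn ℝ 1 g s) :
    ∫⁻ z in s, ∫⁻ x in s, ‖g x - g z‖ₑ ^ 2 ∂ν ∂μ ≤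
      ENNReal.ofReal (4 * d ^ 2 / ε ^ 2) * (A * ∫⁻ w in s, ‖fderiv ℝ g w‖ₑ ^ 2 ∂μ) := by
  set G : E → ℝ≥0∞ := fun w => ‖fderiv ℝ g w‖ₑ ^ 2
  have hG : Measurable G := (measurable_fderiv ℝ g).enorm.pow_const 2
  set k : ℝ → ℝ≥0∞ := fun t => ENNReal.ofReal (t ^ (1 - ε / 2))
  have hmeas : Measurable fun p : E × E × ℝ => k p.2.2 * G (p.2.1 + p.2.2 • (p.1 - p.2.1)) := by
    fun_prop
  have hsegment : ∀ z ∈ s, ∀ x ∈ s, ‖g x - g z‖ₑ ^ 2 ≤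
      ENNReal.ofReal (2 * d ^ 2 / ε) * ∫⁻ t in Ioo (0 : ℝ) 1, k t * G (x + t • (z - x)) := by
    intro z hz x hx
    refine (sq_enorm_sub_le_lintegral_segment hs hconv hg hx hz (half_pos hε)).trans ?_
    rw [← mul_assoc, ← ofReal_norm, ← ENNReal.ofReal_pow (norm_nonneg _),
      ← ENNReal.ofReal_mul (by positivity), ← dist_eq_norm,
      show 2 * d ^ 2 / ε = d ^ 2 * (ε / 2)⁻¹ by field_simp]
    gcongr
    exact hd z hz x hx
  calc ∫⁻ z in s, ∫⁻ x in s, ‖g x - g z‖ₑ ^ 2 ∂ν ∂μ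
      ≤ ∫⁻ z in s, ∫⁻ x in s, ENNReal.ofReal (2 * d ^ 2 / ε) *
          (∫⁻ t in Ioo (0 : ℝ) 1, k t * G (x + t • (z - x))) ∂ν ∂μ :=
        setLIntegral_mono' hs.measurableSet fun z hz =>
          setLIntegral_mono' hs.measurableSet fun x hx => hsegment z hz x hx
    _ = ENNReal.ofReal (2 * d ^ 2 / ε) * ∫⁻ t in Ioo (0 : ℝ) 1,
          k t * ∫⁻ z in s, ∫⁻ x in s, G (x + t • (z - x)) ∂ν ∂μ := by
        simp only [lintegral_const_mul' _ _ ENNReal.ofReal_ne_top]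
        rw [lintegral_lintegral_lintegral_swap _ _ _ hmeas]
        simp only [lintegral_const_mul' _ _ ENNReal.ofReal_ne_top, k]
    _ ≤ ENNReal.ofReal (2 * d ^ 2 / ε) *
          (ENNReal.ofReal (ε - ε / 2)⁻¹ * (A * ∫⁻ w in s, G w ∂μ)) := by
        gcongr
        exact lintegral_rpow_mul_lintegral_lintegral_comp_add_smul_sub_le μ ν hs.measurableSet hconv
          hd (half_lt_self hε) hA hG
    _ = ENNReal.ofReal (4 * d ^ 2 / ε ^ 2) * (A * ∫⁻ w in s, G w ∂μ) := by
        rw [← mul_assoc, ← ENNReal.ofReal_mul (by positivity), sub_half]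
        congr 2
        field_simp
        ring

end SegmentAverage

section Variance

variable {α : Type*} [MeasurableSpace α] {μ : Measure α} [IsFiniteMeasure μ] {f : α → ℝ}

lemma memLp_two_of_lintegral_sq_enorm_sub_ne_top (hf : AEStronglyMeasurable f μ) {c : ℝ}
    (hc : ∫⁻ x, ‖f x - c‖ₑ ^ 2 ∂μ ≠ ∞) : MemLp f 2 μ := by
  have hsub : MemLp (fun x => f x - c) 2 μ := by
    refine ⟨hf.sub aestronglyMeasurable_const, ?_⟩
    rw [eLpNorm_lt_top_iff_lintegral_rpow_enorm_lt_top two_ne_zero ENNReal.ofNat_ne_top]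
    simpa using hc.lt_top
  exact (hsub.add (memLp_const c)).congr_norm hf (Eventually.of_forall fun x => by simp)

lemma integral_sq_sub_average_le (hf : MemLp f 2 μ) (c : ℝ) :
    ∫ x, (f x - ⨍ y, f y ∂μ) ^ 2 ∂μ ≤ ∫ x, (f x - c) ^ 2 ∂μ := by
  set a := ⨍ y, f y ∂μ
  have hint : Integrable (fun x => f x - a) μ :=
    (hf.integrable one_le_two).sub (integrable_const a)
  have hsq : Integrable (fun x => (f x - a) ^ 2) μ := (hf.sub (memLp_const a)).integrable_sq
  have hexpand : ∀ x, (f x - c) ^ 2 = (f x - a) ^ 2 + 2 * (a - c) * (f x - a) + (a - c) ^ 2 :=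
    fun x => by ring
  have hcross : Integrable (fun x => 2 * (a - c) * (f x - a)) μ := hint.const_mul _
  have hsum : Integrable (fun x => (f x - a) ^ 2 + 2 * (a - c) * (f x - a)) μ := hsq.add hcross
  simp only [hexpand]
  rw [integral_add hsum (integrable_const _), integral_add hsq hcross, integral_const_mul,
    integral_sub_average, mul_zero, add_zero]
  exact le_add_of_nonneg_right (integral_nonneg fun x => sq_nonneg _)

lemma ofReal_integral_sq_sub_average_le (hf : AEStronglyMeasurable f μ) (c : ℝ) :
    ENNReal.ofReal (∫ x, (f x - ⨍ y, f y ∂μ) ^ 2 ∂μ) ≤ ∫⁻ x, ‖f x - c‖ₑ ^ 2 ∂μ := by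
  by_cases hc : ∫⁻ x, ‖f x - c‖ₑ ^ 2 ∂μ = ∞
  · exact hc ▸ le_top
  have hfc := memLp_two_of_lintegral_sq_enorm_sub_ne_top hf hc
  refine (ENNReal.ofReal_le_ofReal (integral_sq_sub_average_le hfc c)).trans_eq ?_
  have hint : Integrable (fun x => (f x - c) ^ 2) μ := (hfc.sub (memLp_const c)).integrable_sq
  rw [ofReal_integral_eq_lintegral_ofReal hint (Eventually.of_forall fun x => sq_nonneg _)]
  refine lintegral_congr fun x => ?_
  rw [← ofReal_norm, ← ENNReal.ofReal_pow (norm_nonneg _), Real.norm_eq_abs, sq_abs]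

end Variance

namespace IsC1QCPlane

variable {K : ℝ} {Φ : ℂ → ℂ}

lemma measurePreserving_comap (h : IsC1QCPlane K Φ) :
    MeasurePreserving Φ (volume.comap Φ) volume := by
  refine ⟨h.measurableEmbedding.measurable, ?_⟩
  rw [h.measurableEmbedding.map_comap, h.2.1.2.range_eq, Measure.restrict_univ]

lemma volume_image_closedBall_mul_two_le (h : IsC1QCPlane K Φ) {w : ℂ} (hw : w ∈ ball 0 1) {t : ℝ}
    (ht : t ∈ Ioo 0 1) :
    volume (Φ '' closedBall w (t * 2)) ≤
      ENNReal.ofReal (2048 * exp (1200 * K)) * volume (Φ '' ball 0 1) *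
        ENNReal.ofReal (t ^ (1 / (30 * K))) := by
  have hK := h.one_le
  have hsub : closedBall w 2 ⊆ closedBall 0 (3 * 1) :=
    closedBall_subset_closedBall' (by linarith [mem_ball.1 hw])
  have hpow : (2 * t) ^ (1 / (30 * K)) ≤ 2 * t ^ (1 / (30 * K)) := by
    rw [mul_rpow zero_le_two ht.1.le]
    gcongr
    · exact rpow_nonneg ht.1.le _
    · exact rpow_le_self_of_one_le one_le_two ((div_le_one (by positivity)).2 (by linarith))
  calc volume (Φ '' closedBall w (t * 2))
      ≤ ENNReal.ofReal ((2 * t) ^ (1 / (30 * K))) * volume (Φ '' closedBall w 2) :=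
        h.volume_image_closedBall_le_rpow_mul w ht.1 ht.2.le two_pos
    _ ≤ ENNReal.ofReal (2 * t ^ (1 / (30 * K))) *
          (ENNReal.ofReal (1024 * exp (1200 * K)) * volume (Φ '' ball 0 1)) := by
        gcongr
        exact (measure_mono (image_mono hsub)).trans
          (h.volume_image_closedBall_three_mul_le 0 one_pos)
    _ = _ := by
        rw [ENNReal.ofReal_mul zero_le_two, show (2048 : ℝ) * exp (1200 * K) =
          2 * (1024 * exp (1200 * K)) by ring, ENNReal.ofReal_mul zero_le_two]
        ring

lemma comap_volume_closedBall_mul_two_le (h : IsC1QCPlane K Φ) {w : ℂ} (hw : w ∈ ball 0 1) {t : ℝ}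
    (ht : t ∈ Ioo 0 1) :
    volume.comap Φ (closedBall w (t * 2)) ≤
      ENNReal.ofReal (2048 * exp (1200 * K)) * volume (Φ '' ball 0 1) *
        ENNReal.ofReal (t ^ (finrank ℝ ℂ - 2 + 1 / (30 * K))) := by
  rw [h.measurableEmbedding.comap_apply, Complex.finrank_real_complex, Nat.cast_ofNat, sub_self,
    zero_add]
  exact h.volume_image_closedBall_mul_two_le hw ht

lemma lintegral_lintegral_sq_enorm_sub_comp_le (h : IsC1QCPlane K Φ) {F : Type*}
    [NormedAddCommGroup F] [NormedSpace ℝ F] [CompleteSpace F] {f : ℂ → F}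
    (hf : ContDiffOn ℝ 1 f (Φ '' ball 0 1)) :
    ∫⁻ z in ball 0 1, ∫⁻ w in Φ '' ball 0 1, ‖f w - f (Φ z)‖ₑ ^ 2 ≤
      ENNReal.ofReal (28800 * 1024 * K ^ 3 * exp (1200 * K)) * volume (Φ '' ball 0 1) *
        ∫⁻ w in Φ '' ball 0 1, ‖fderiv ℝ f w‖ₑ ^ 2 := by
  have hK := h.one_le
  set Ω := Φ '' ball 0 1 with hΩ
  have : IsFiniteMeasureOnCompacts (volume.comap Φ) :=
    IsFiniteMeasureOnCompacts.comap' volume h.1.continuous h.measurableEmbedding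
  have hmaps : MapsTo Φ (ball 0 1) Ω := mapsTo_image Φ _
  have hΩ_open : IsOpen Ω := h.isOpenMap _ isOpen_ball
  have hdiam : ∀ x ∈ ball (0 : ℂ) 1, ∀ z ∈ ball (0 : ℂ) 1, dist x z ≤ 2 := fun x hx z hz => by
    linarith [dist_triangle_right x z 0, mem_ball.1 hx, mem_ball.1 hz]
  have henergy := h.lintegral_enorm_fderiv_comp_sq_le measurableSet_ball fun z hz =>
    (hf.contDiffAt (hΩ_open.mem_nhds (hmaps hz))).differentiableAt one_ne_zero
  calc ∫⁻ z in ball 0 1, ∫⁻ w in Ω, ‖f w - f (Φ z)‖ₑ ^ 2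
      = ∫⁻ z in ball 0 1, ∫⁻ x in ball 0 1, ‖(f ∘ Φ) x - (f ∘ Φ) z‖ₑ ^ 2 ∂volume.comap Φ := by
        simp only [hΩ, ← h.measurePreserving_comap.setLIntegral_comp_emb h.measurableEmbedding,
          Function.comp_apply]
    _ ≤ ENNReal.ofReal (4 * 2 ^ 2 / (1 / (30 * K)) ^ 2) *
          (ENNReal.ofReal (2048 * exp (1200 * K)) * volume Ω *
            ∫⁻ z in ball 0 1, ‖fderiv ℝ (f ∘ Φ) z‖ₑ ^ 2) :=
        lintegral_lintegral_sq_enorm_sub_le volume (volume.comap Φ) isOpen_ball (convex_ball 0 1)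
          hdiam (by positivity) (fun w hw t ht => h.comap_volume_closedBall_mul_two_le hw ht)
            (hf.comp h.1.contDiffOn hmaps)
    _ ≤ ENNReal.ofReal (4 * 2 ^ 2 / (1 / (30 * K)) ^ 2) *
          (ENNReal.ofReal (2048 * exp (1200 * K)) * volume Ω *
            (ENNReal.ofReal K * ∫⁻ w in Ω, ‖fderiv ℝ f w‖ₑ ^ 2)) := by gcongr
    _ = _ := by
        have hconst : ENNReal.ofReal (28800 * 1024 * K ^ 3 * exp (1200 * K)) =
            ENNReal.ofReal (4 * 2 ^ 2 / (1 / (30 * K)) ^ 2) *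
              ENNReal.ofReal (2048 * exp (1200 * K)) * ENNReal.ofReal K := by
          rw [← ENNReal.ofReal_mul (by positivity), ← ENNReal.ofReal_mul (by positivity)]
          congr 1
          field_simp
          norm_num
        rw [hconst]
        ring

end IsC1QCPlane

section Constants

lemma rpow_one_div_le_two {α y : ℝ} (hα : 1 ≤ α) (hy0 : 0 ≤ y) (hy : y ≤ 1 + α) :
    y ^ (1 / α) ≤ 2 := by
  have hbernoulli : 1 + α ≤ 2 ^ α := by
    simpa [one_add_one_eq_two] using
      one_add_mul_self_le_rpow_one_add (s := 1) (by norm_num) hα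
  calc y ^ (1 / α) ≤ (2 ^ α) ^ (1 / α) := by gcongr; exact hy.trans hbernoulli
    _ = 2 := by rw [one_div, rpow_rpow_inv zero_le_two (by linarith)]

lemma mul_exp_le_exp_sq_mul_div_log_three {K : ℝ} (hK : 1 ≤ K) :
    K * exp (1200 * K) ≤ exp (K ^ 2 * π ^ 2 * (2 + π ^ 4) ^ 2 / (2 * log 3)) := by
  have : 0 < log 3 := log_pos (by norm_num)
  have hlog_le : log 3 ≤ 2 := by linarith [log_le_sub_one_of_pos (zero_lt_three (α := ℝ))]
  have hexponent : 1201 * K ≤ K ^ 2 * π ^ 2 * (2 + π ^ 4) ^ 2 / (2 * log 3) := by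
    rw [le_div_iff₀ (by positivity)]
    calc 1201 * K * (2 * log 3) ≤ 1201 * K * 4 := by gcongr; linarith
      _ ≤ K ^ 2 * 3 ^ 2 * (2 + 3 ^ 4) ^ 2 := by nlinarith
      _ ≤ K ^ 2 * π ^ 2 * (2 + π ^ 4) ^ 2 := by gcongr <;> exact pi_gt_three.le
  calc K * exp (1200 * K) ≤ exp K * exp (1200 * K) := by gcongr; linarith [add_one_le_exp K]
    _ = exp (1201 * K) := by rw [← exp_add]; ring_nf
    _ ≤ _ := exp_le_exp.2 hexponent

lemma poincare_constant_le {K α ν : ℝ} (hK : 1 ≤ K) (hα : 2 < α) (hν0 : 0 ≤ ν) (hν : ν < 1) :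
    28800 * 1024 * K ^ 3 * exp (1200 * K) / π ≤
      K ^ 2 * (10 ^ 6 / ((α - 1) * (1 - ν)) ^ (1 / α)) ^ 2 / π *
        ((2 * α - 2) / (α - 2)) ^ ((2 * α - 2) / α) *
        exp (K ^ 2 * π ^ 2 * (2 + π ^ 4) ^ 2 / (2 * log 3)) := by
  have hα2 : 0 < α - 2 := by linarith
  have hy : 0 < (α - 1) * (1 - ν) := mul_pos (by linarith) (by linarith)
  have hC : 5 * 10 ^ 5 ≤ 10 ^ 6 / ((α - 1) * (1 - ν)) ^ (1 / α) := by
    rw [le_div_iff₀ (rpow_pos_of_pos hy _)]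
    linarith [rpow_one_div_le_two (by linarith) hy.le (show (α - 1) * (1 - ν) ≤ 1 + α by nlinarith)]
  have hR : 1 ≤ ((2 * α - 2) / (α - 2)) ^ ((2 * α - 2) / α) :=
    one_le_rpow ((one_le_div hα2).2 (by linarith)) (div_nonneg (by linarith) (by linarith))
  calc 28800 * 1024 * K ^ 3 * exp (1200 * K) / π
      = K ^ 2 * (28800 * 1024) / π * 1 * (K * exp (1200 * K)) := by ring
    _ ≤ K ^ 2 * (5 * 10 ^ 5) ^ 2 / π * 1 * (K * exp (1200 * K)) := by gcongr; norm_num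
    _ ≤ _ := by gcongr; exact mul_exp_le_exp_sq_mul_div_log_three hK

end Constants

theorem neumann_poincare_quasidisc_general {K : ℝ} {Φ : ℂ → ℂ} (hΦ : IsC1QCPlane K Φ) {f : ℂ → ℝ}
    (hf : ContDiffOn ℝ 1 f (Φ '' ball 0 1))
    (hg2 : IntegrableOn (fun z => ‖fderiv ℝ f z‖ ^ 2) (Φ '' ball 0 1)) :
    MemLp f 2 (volume.restrict (Φ '' ball 0 1)) ∧
      ∫ z in Φ '' ball 0 1, (f z - ⨍ w in Φ '' ball 0 1, f w) ^ 2 ≤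
        28800 * 1024 * K ^ 3 * exp (1200 * K) / π * (volume (Φ '' ball 0 1)).toReal *
          ∫ z in Φ '' ball 0 1, ‖fderiv ℝ f z‖ ^ 2 := by
  have hK := hΦ.one_le
  set Ω := Φ '' ball 0 1
  have hΩ_meas : MeasurableSet Ω := (hΦ.isOpenMap _ isOpen_ball).measurableSet
  have hΩ_fin : volume Ω ≠ ∞ := ((measure_mono (image_mono ball_subset_closedBall)).trans_lt
    ((isCompact_closedBall 0 1).image hΦ.1.continuous).measure_lt_top).ne
  have : IsFiniteMeasure (volume.restrict Ω) := isFiniteMeasure_restrict.2 hΩ_fin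
  have hf_meas : AEStronglyMeasurable f (volume.restrict Ω) :=
    hf.continuousOn.aestronglyMeasurable hΩ_meas
  have henergy : ∫⁻ w in Ω, ‖fderiv ℝ f w‖ₑ ^ 2 =
      ENNReal.ofReal (∫ w in Ω, ‖fderiv ℝ f w‖ ^ 2) := by
    rw [ofReal_integral_eq_lintegral_ofReal hg2 (Eventually.of_forall fun w => by positivity)]
    simp only [ENNReal.ofReal_pow (norm_nonneg _), ofReal_norm]
  have hdouble : ∫⁻ z in ball 0 1, ∫⁻ w in Ω, ‖f w - f (Φ z)‖ₑ ^ 2 ≤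
      ENNReal.ofReal (28800 * 1024 * K ^ 3 * exp (1200 * K) * (volume Ω).toReal *
        ∫ w in Ω, ‖fderiv ℝ f w‖ ^ 2) := by
    rw [ENNReal.ofReal_mul (by positivity), ENNReal.ofReal_mul (by positivity),
      ENNReal.ofReal_toReal hΩ_fin, ← henergy]
    exact hΦ.lintegral_lintegral_sq_enorm_sub_comp_le hf
  have hvol : volume (ball (0 : ℂ) 1) = ENNReal.ofReal π := by
    rw [Complex.volume_ball, ENNReal.ofReal_one, one_pow, one_mul, ← ENNReal.ofReal_coe_nnreal,
      NNReal.coe_real_pi]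
  constructor
  · by_contra hnot
    have htop : ∀ z, ∫⁻ w in Ω, ‖f w - f (Φ z)‖ₑ ^ 2 = ∞ := fun z => by_contra fun hz =>
      hnot (memLp_two_of_lintegral_sq_enorm_sub_ne_top hf_meas hz)
    simp only [htop, setLIntegral_const, hvol, ENNReal.top_mul (ENNReal.ofReal_pos.2 pi_pos).ne',
      top_le_iff, ENNReal.ofReal_ne_top] at hdouble
  · have haverage := (lintegral_mono fun z =>
      ofReal_integral_sq_sub_average_le hf_meas (f (Φ z))).trans hdouble
    rw [setLIntegral_const, hvol, ← ENNReal.ofReal_mul' pi_pos.le,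
      ENNReal.ofReal_le_ofReal_iff (by positivity)] at haverage
    rwa [div_mul_eq_mul_div, div_mul_eq_mul_div, le_div_iff₀ pi_pos]

/-- Theorem A (Rayleigh-quotient form): for a `C¹` `K`-quasidisc `Ω`,
`2 < α < 2K²/(K²−1)` and `ν = 10^{4α}((α−2)/(α−1))(24π²K²)^α < 1`, every test
function `f` satisfies
`∬_Ω |f − f_Ω|² ≤ (K²C_α²/π)((2α−2)/(α−2))^{(2α−2)/α}·exp{K²π²(2+π⁴)²/(2 log 3)}·|Ω|·∬_Ω |∇f|²`,
where `C_α = 10⁶/[(α−1)(1−ν)]^{1/α}`. -/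
theorem neumann_poincare_quasidisc
    (K : ℝ) (hK : 1 ≤ K) (Φ : ℂ → ℂ) (hΦ : IsC1QCPlane K Φ)
    (Ω : Set ℂ) (hΩ : Ω = Φ '' Metric.ball 0 1)
    (α : ℝ) (hα : 2 < α) (hαK : α * (K ^ 2 - 1) < 2 * K ^ 2)
    (hν : (10 : ℝ) ^ (4 * α) * ((α - 2) / (α - 1)) * (24 * π ^ 2 * K ^ 2) ^ α < 1)
    (f : ℂ → ℝ) (hf : ContDiffOn ℝ 1 f Ω)
    (hf2 : IntegrableOn (fun z => (f z) ^ 2) Ω)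
    (hg2 : IntegrableOn (fun z => ‖fderiv ℝ f z‖ ^ 2) Ω) :
    ∫ z in Ω, (f z - ⨍ w in Ω, f w) ^ 2
      ≤ (K ^ 2 *
            (10 ^ 6 /
              ((α - 1) *
                (1 - (10 : ℝ) ^ (4 * α) * ((α - 2) / (α - 1)) * (24 * π ^ 2 * K ^ 2) ^ α))
                ^ (1 / α)) ^ 2 / π) *
          ((2 * α - 2) / (α - 2)) ^ ((2 * α - 2) / α) *
          Real.exp (K ^ 2 * π ^ 2 * (2 + π ^ 4) ^ 2 / (2 * Real.log 3)) *
          (volume Ω).toReal *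
          ∫ z in Ω, ‖fderiv ℝ f z‖ ^ 2 := by
  have : 0 < α - 2 := sub_pos.2 hα
  have : 0 < α - 1 := by linarith
  subst hΩ
  refine (neumann_poincare_quasidisc_general hΦ hf hg2).2.trans ?_
  gcongr
  exact poincare_constant_le hK hα (by positivity) hν
end

section
/- Let 0 < β < 1, set K = cot²((1−β)π/4), and let φ : 𝔻 → ℂ be an injective holomorphic function with φ(0) = 0 satisfying the star-shapedness condition |arg(z·φ′(z)/φ(z))| ≤ βπ/2 for all z ∈ 𝔻, z ≠ 0. Suppose Ω = φ(𝔻) is bounded. Then for every α with 2 < α, α(K² − 1) < 2K², and ν := 10^{4α}·(24π²·cot⁴((1−β)π/4))^α·(α−2)/(α−1) < 1, every test function f on Ω satisfies ∬_Ω |f − f_Ω|² dxdy ≤ (C_α²·cot⁴((1−β)π/4)/π) · ((2α−2)/(α−2))^{(2α−2)/α} · exp{π²(2 + π⁴)²·cot⁴((1−β)π/4)/(2 log 3)} · |Ω| · ∬_Ω |∇f|² dxdy, where C_α = 10⁶/[(α−1)(1−ν)]^{1/α}. -/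
open MeasureTheory Metric Real
open scoped ENNReal NNReal

/-!
If `Ω` is star-shaped with respect to every point of a set `B`, then for `y ∈ B` and `x ∈ Ω` the
increment `f x - f y` is the integral of the gradient along the segment from `x` to `y`. Squaring
and averaging over `x` and `y` bounds the variance of `f`: for each time `t` one of the endpoints,
`x` if `t ≤ 1/2` and `y` otherwise, parametrises the point `(1 - t) x + t y` with Jacobian at least
`2⁻ⁿ`.

For a strongly starlike `φ` such a `B` is a disc about `0`. On a circle `|z| = r` the derivative of
`log |φ|` with respect to the angle is `-Im q`, where `q = z φ' / φ` lies in the sector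
`κ |q| ≤ Re q` and `Re q` has mean `1`; hence `log |φ|` oscillates by at most `2π/κ` there, and the
maximum principle compares `|φ z|` with `|φ'(0)| |z|`. If moreover `|y| < κ |φ|` on the circle, the
sector condition makes every segment towards `y` cross the level curve `φ(|z| = r)` inwards, so `Ω`
is star-shaped with respect to `y` once this holds for `r` close to `1`. The resulting constant
`16 exp(8π/κ) / (π κ²)` depends on `β` only and is smaller than the one claimed for each `α`.
-/

section Poincare

open Set AffineMap Module

lemma sq_lintegral_le_lintegral_sq {X : Type*} [MeasurableSpace X] {μ : Measure X}
    [IsProbabilityMeasure μ] {g : X → ℝ≥0∞} (hg : AEMeasurable g μ) :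
    (∫⁻ x, g x ∂μ) ^ 2 ≤ ∫⁻ x, g x ^ 2 ∂μ := by
  have h := ENNReal.lintegral_mul_le_Lp_mul_Lq μ .two_two hg (aemeasurable_const (b := 1))
  simp only [Pi.mul_apply, mul_one, ENNReal.rpow_two, one_pow, lintegral_const, measure_univ,
    ENNReal.one_rpow] at h
  calc (∫⁻ x, g x ∂μ) ^ 2 ≤ ((∫⁻ x, g x ^ 2 ∂μ) ^ (1 / 2 : ℝ)) ^ 2 := by gcongr
    _ = ∫⁻ x, g x ^ 2 ∂μ := by
      rw [← ENNReal.rpow_natCast, ← ENNReal.rpow_mul]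
      norm_num

lemma integral_sub_average_sq_le {X : Type*} [MeasurableSpace X] {μ : Measure X}
    [IsFiniteMeasure μ] {f : X → ℝ} (hf : MemLp f 2 μ) (a : ℝ) :
    ∫ x, (f x - ⨍ y, f y ∂μ) ^ 2 ∂μ ≤ ∫ x, (f x - a) ^ 2 ∂μ := by
  set m := ⨍ y, f y ∂μ
  have hsub : Integrable (fun x ↦ f x - m) μ :=
    (hf.integrable one_le_two).sub (integrable_const m)
  have hsq : Integrable (fun x ↦ (f x - m) ^ 2) μ := (hf.sub (memLp_const m)).integrable_sq
  calc ∫ x, (f x - m) ^ 2 ∂μ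
      ≤ (∫ x, (f x - m) ^ 2 ∂μ) + μ.real univ * (m - a) ^ 2 :=
        le_add_of_nonneg_right (by positivity)
    _ = ∫ x, (f x - m) ^ 2 + 2 * (m - a) * (f x - m) + (m - a) ^ 2 ∂μ := by
        rw [integral_add (by exact hsq.add (hsub.const_mul _)) (integrable_const _),
          integral_add hsq (hsub.const_mul _), integral_const_mul, integral_sub_average]
        simp
    _ = ∫ x, (f x - a) ^ 2 ∂μ := by congr with x; ring

lemma ofReal_integral_norm_sq {X F : Type*} [MeasurableSpace X] {μ : Measure X}
    [NormedAddCommGroup F] {g : X → F} (hg : Integrable (fun x ↦ ‖g x‖ ^ 2) μ) :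
    ENNReal.ofReal (∫ x, ‖g x‖ ^ 2 ∂μ) = ∫⁻ x, ‖g x‖ₑ ^ 2 ∂μ := by
  rw [ofReal_integral_eq_lintegral_ofReal hg (.of_forall fun x ↦ by positivity)]
  simp only [ENNReal.ofReal_pow (norm_nonneg _), ofReal_norm]

variable {E : Type*} [NormedAddCommGroup E] [NormedSpace ℝ E]

lemma enorm_sub_sq_le_lintegral_enorm_fderiv_sq {F : Type*} [NormedAddCommGroup F]
    [NormedSpace ℝ F] {f : E → F} {s : Set E} (hs : IsOpen s) (hf : ContDiffOn ℝ 1 f s)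
    {x y : E} (hxy : segment ℝ x y ⊆ s) :
    ‖f y - f x‖ₑ ^ 2 ≤
      ‖y - x‖ₑ ^ 2 * ∫⁻ t in Icc (0 : ℝ) 1, ‖fderiv ℝ f (lineMap x y t)‖ₑ ^ 2 := by
  have hmaps : MapsTo (lineMap x y : ℝ → E) (Icc 0 1) s := by
    rw [mapsTo_iff_image_subset, ← segment_eq_image_lineMap]
    exact hxy
  have hcont : ContinuousOn (fun t : ℝ ↦ fderiv ℝ f (lineMap x y t)) (Icc 0 1) :=
    (hf.continuousOn_fderiv_of_isOpen hs le_rfl).comp lineMap_continuous.continuousOn hmaps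
  have hderiv : ∀ t ∈ Icc (0 : ℝ) 1,
      deriv (f ∘ lineMap x y) t = fderiv ℝ f (lineMap x y t) (y - x) := fun t ht ↦
    ((hf.differentiableOn one_ne_zero).differentiableAt
      (hs.mem_nhds (hmaps ht))).hasFDerivAt.comp_hasDerivAt t hasDerivAt_lineMap |>.deriv
  have : IsProbabilityMeasure (volume.restrict (Icc (0 : ℝ) 1)) := ⟨by simp⟩
  have hbound : ‖f y - f x‖ₑ ≤
      ‖y - x‖ₑ * ∫⁻ t in Icc (0 : ℝ) 1, ‖fderiv ℝ f (lineMap x y t)‖ₑ := calc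
    ‖f y - f x‖ₑ ≤ ∫⁻ t in Icc (0 : ℝ) 1, ‖deriv (f ∘ lineMap x y) t‖ₑ := by
      simpa using enorm_sub_le_lintegral_deriv_of_contDiffOn_Icc
        (hf.comp (contDiff_lineMap x y).contDiffOn hmaps) zero_le_one
    _ ≤ ∫⁻ t in Icc (0 : ℝ) 1, ‖y - x‖ₑ * ‖fderiv ℝ f (lineMap x y t)‖ₑ := by
      refine setLIntegral_mono' measurableSet_Icc fun t ht ↦ ?_
      rw [hderiv t ht, mul_comm]
      exact ContinuousLinearMap.le_opENorm _ _
    _ = ‖y - x‖ₑ * ∫⁻ t in Icc (0 : ℝ) 1, ‖fderiv ℝ f (lineMap x y t)‖ₑ :=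
      lintegral_const_mul' _ _ enorm_ne_top
  calc ‖f y - f x‖ₑ ^ 2
      ≤ (‖y - x‖ₑ * ∫⁻ t in Icc (0 : ℝ) 1, ‖fderiv ℝ f (lineMap x y t)‖ₑ) ^ 2 := by gcongr
    _ = ‖y - x‖ₑ ^ 2 * (∫⁻ t in Icc (0 : ℝ) 1, ‖fderiv ℝ f (lineMap x y t)‖ₑ) ^ 2 := mul_pow ..
    _ ≤ _ := by
      gcongr
      exact sq_lintegral_le_lintegral_sq (hcont.enorm.aemeasurable measurableSet_Icc)

variable [FiniteDimensional ℝ E] [MeasurableSpace E] [BorelSpace E] {μ : Measure E}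
  [μ.IsAddHaarMeasure] {H : E → ℝ≥0∞}

lemma lintegral_comp_lineMap_le (hH : Measurable H) {t : ℝ} (ht : t ≤ 1 / 2) (y : E) :
    ∫⁻ x, H (lineMap x y t) ∂μ ≤ 2 ^ finrank ℝ E * ∫⁻ x, H x ∂μ := by
  have hpos : 0 < 1 - t := by linarith
  calc ∫⁻ x, H (lineMap x y t) ∂μ
      = ∫⁻ x, H (x + t • y) ∂(μ.map ((1 - t) • ·)) := by
        rw [lintegral_map (by fun_prop) (by fun_prop)]
        simp only [lineMap_apply_module]
    _ = ENNReal.ofReal |((1 - t) ^ finrank ℝ E)⁻¹| * ∫⁻ x, H x ∂μ := by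
        rw [Measure.map_addHaar_smul _ hpos.ne', lintegral_smul_measure,
          lintegral_add_right_eq_self, smul_eq_mul]
    _ ≤ 2 ^ finrank ℝ E * ∫⁻ x, H x ∂μ := by
        gcongr
        rw [abs_of_pos (by positivity), ← inv_pow]
        refine ENNReal.ofReal_le_of_le_toReal ?_
        rw [ENNReal.toReal_pow, ENNReal.toReal_ofNat]
        gcongr
        exact inv_le_of_inv_le₀ two_pos (by linarith)

lemma lintegral_lintegral_comp_lineMap_le (hH : Measurable H) {A B : Set E}
    (hAB : μ B ≤ μ A) (t : ℝ) :
    ∫⁻ y in B, ∫⁻ x in A, H (lineMap x y t) ∂μ ∂μ ≤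
      2 ^ finrank ℝ E * (∫⁻ z, H z ∂μ) * μ A := by
  rcases le_total t (1 / 2) with ht | ht
  · calc ∫⁻ y in B, ∫⁻ x in A, H (lineMap x y t) ∂μ ∂μ
        ≤ ∫⁻ y in B, 2 ^ finrank ℝ E * ∫⁻ z, H z ∂μ ∂μ :=
          lintegral_mono fun y ↦
            (setLIntegral_le_lintegral _ _).trans (lintegral_comp_lineMap_le hH ht y)
      _ = 2 ^ finrank ℝ E * (∫⁻ z, H z ∂μ) * μ B := setLIntegral_const _ _
      _ ≤ _ := by gcongr
  · have hmeas : Measurable fun p : E × E ↦ H (lineMap p.2 p.1 t) := by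
      simp only [lineMap_apply_module]
      fun_prop
    calc ∫⁻ y in B, ∫⁻ x in A, H (lineMap x y t) ∂μ ∂μ
        = ∫⁻ x in A, ∫⁻ y in B, H (lineMap y x (1 - t)) ∂μ ∂μ := by
          rw [lintegral_lintegral_swap hmeas.aemeasurable]
          simp only [lineMap_apply_one_sub]
      _ ≤ ∫⁻ x in A, 2 ^ finrank ℝ E * ∫⁻ z, H z ∂μ ∂μ :=
          lintegral_mono fun x ↦ (setLIntegral_le_lintegral _ _).trans
            (lintegral_comp_lineMap_le hH (by linarith) x)
      _ = _ := setLIntegral_const _ _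

lemma lintegral_lintegral_lintegral_comp_lineMap_le (hH : Measurable H) {A B : Set E}
    (hAB : μ B ≤ μ A) :
    ∫⁻ y in B, ∫⁻ x in A, (∫⁻ t in Icc (0 : ℝ) 1, H (lineMap x y t)) ∂μ ∂μ ≤
      2 ^ finrank ℝ E * (∫⁻ z, H z ∂μ) * μ A := by
  have hmeas : Measurable fun p : (E × ℝ) × E ↦ H (lineMap p.2 p.1.1 p.1.2) := by
    simp only [lineMap_apply_module]
    fun_prop
  have hswap (y : E) : ∫⁻ x in A, (∫⁻ t in Icc (0 : ℝ) 1, H (lineMap x y t)) ∂μ =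
      ∫⁻ t in Icc (0 : ℝ) 1, ∫⁻ x in A, H (lineMap x y t) ∂μ :=
    lintegral_lintegral_swap (hmeas.comp (measurable_prodMk_left.comp measurable_snd |>.prodMk
      measurable_fst : Measurable fun p : E × ℝ ↦ ((y, p.2), p.1))).aemeasurable
  calc ∫⁻ y in B, ∫⁻ x in A, (∫⁻ t in Icc (0 : ℝ) 1, H (lineMap x y t)) ∂μ ∂μ
      = ∫⁻ t in Icc (0 : ℝ) 1, ∫⁻ y in B, ∫⁻ x in A, H (lineMap x y t) ∂μ ∂μ := by
        simp only [hswap]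
        exact lintegral_lintegral_swap hmeas.lintegral_prod_right'.aemeasurable
    _ ≤ ∫⁻ _ in Icc (0 : ℝ) 1, 2 ^ finrank ℝ E * (∫⁻ z, H z ∂μ) * μ A :=
        lintegral_mono fun t ↦ lintegral_lintegral_comp_lineMap_le hH hAB t
    _ = 2 ^ finrank ℝ E * (∫⁻ z, H z ∂μ) * μ A := by simp

variable {Ω B : Set E}

lemma setLIntegral_setLIntegral_enorm_sub_sq_le {F : Type*} [NormedAddCommGroup F]
    [NormedSpace ℝ F] [CompleteSpace F] {f : E → F} (hΩ : IsOpen Ω)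
    (hbdd : Bornology.IsBounded Ω) (hB : MeasurableSet B) (hBΩ : B ⊆ Ω)
    (hstar : ∀ y ∈ B, StarConvex ℝ y Ω) (hf : ContDiffOn ℝ 1 f Ω) :
    ∫⁻ y in B, ∫⁻ x in Ω, ‖f x - f y‖ₑ ^ 2 ∂μ ∂μ ≤
      ediam Ω ^ 2 * (2 ^ finrank ℝ E * (∫⁻ z in Ω, ‖fderiv ℝ f z‖ₑ ^ 2 ∂μ) * μ Ω) := by
  set H : E → ℝ≥0∞ := Ω.indicator fun z ↦ ‖fderiv ℝ f z‖ₑ ^ 2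
  have hH : Measurable H :=
    ((measurable_fderiv ℝ f).enorm.pow_const 2).indicator hΩ.measurableSet
  have hdiam : ediam Ω ^ 2 ≠ ∞ := ENNReal.pow_ne_top hbdd.ediam_ne_top
  have hpair : ∀ y ∈ B, ∀ x ∈ Ω,
      ‖f x - f y‖ₑ ^ 2 ≤ ediam Ω ^ 2 * ∫⁻ t in Icc (0 : ℝ) 1, H (lineMap x y t) := by
    intro y hy x hx
    have hseg : segment ℝ x y ⊆ Ω := segment_symm ℝ y x ▸ (hstar y hy).segment_subset hx
    have hH_eq : ∫⁻ t in Icc (0 : ℝ) 1, ‖fderiv ℝ f (lineMap x y t)‖ₑ ^ 2 =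
        ∫⁻ t in Icc (0 : ℝ) 1, H (lineMap x y t) :=
      setLIntegral_congr_fun measurableSet_Icc fun t ht ↦ .symm <| indicator_of_mem
        (hseg (segment_eq_image_lineMap ℝ x y ▸ mem_image_of_mem _ ht)) _
    rw [← enorm_neg, neg_sub, ← hH_eq]
    refine (enorm_sub_sq_le_lintegral_enorm_fderiv_sq hΩ hf hseg).trans ?_
    gcongr
    rw [← edist_eq_enorm_sub]
    exact edist_le_ediam_of_mem (hBΩ hy) hx
  calc ∫⁻ y in B, ∫⁻ x in Ω, ‖f x - f y‖ₑ ^ 2 ∂μ ∂μ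
      ≤ ∫⁻ y in B, ∫⁻ x in Ω, ediam Ω ^ 2 * (∫⁻ t in Icc (0 : ℝ) 1, H (lineMap x y t)) ∂μ ∂μ :=
        setLIntegral_mono' hB fun y hy ↦ setLIntegral_mono' hΩ.measurableSet (hpair y hy)
    _ = ediam Ω ^ 2 *
          ∫⁻ y in B, ∫⁻ x in Ω, (∫⁻ t in Icc (0 : ℝ) 1, H (lineMap x y t)) ∂μ ∂μ := by
        simp only [lintegral_const_mul' _ _ hdiam]
    _ ≤ ediam Ω ^ 2 * (2 ^ finrank ℝ E * (∫⁻ z, H z ∂μ) * μ Ω) := by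
        gcongr
        exact lintegral_lintegral_lintegral_comp_lineMap_le hH (measure_mono hBΩ)
    _ = _ := by rw [lintegral_indicator hΩ.measurableSet]

theorem integral_sub_average_sq_le_of_starConvex {f : E → ℝ} (hΩ : IsOpen Ω)
    (hbdd : Bornology.IsBounded Ω) (hB : MeasurableSet B) (hBΩ : B ⊆ Ω) (hμB : μ B ≠ 0)
    (hstar : ∀ y ∈ B, StarConvex ℝ y Ω) (hf : ContDiffOn ℝ 1 f Ω)
    (hf2 : IntegrableOn (fun z ↦ f z ^ 2) Ω μ)
    (hg2 : IntegrableOn (fun z ↦ ‖fderiv ℝ f z‖ ^ 2) Ω μ) :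
    ∫ z in Ω, (f z - ⨍ w in Ω, f w ∂μ) ^ 2 ∂μ ≤
      2 ^ finrank ℝ E * diam Ω ^ 2 / μ.real B * μ.real Ω *
        ∫ z in Ω, ‖fderiv ℝ f z‖ ^ 2 ∂μ := by
  have hμΩ : μ Ω ≠ ∞ := hbdd.measure_lt_top.ne
  have : IsFiniteMeasure (μ.restrict Ω) := ⟨by simpa using hμΩ.lt_top⟩
  have hL2 : MemLp f 2 (μ.restrict Ω) := (memLp_two_iff_integrable_sq
    (hf.continuousOn.aestronglyMeasurable hΩ.measurableSet)).2 hf2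
  set V := ∫ z in Ω, (f z - ⨍ w in Ω, f w ∂μ) ^ 2 ∂μ
  set D := ∫ z in Ω, ‖fderiv ℝ f z‖ ^ 2 ∂μ
  have hV (y : E) : ENNReal.ofReal V ≤ ∫⁻ x in Ω, ‖f x - f y‖ₑ ^ 2 ∂μ := by
    rw [← ofReal_integral_norm_sq (by simpa using (hL2.sub (memLp_const (f y))).integrable_sq)]
    simpa using ENNReal.ofReal_le_ofReal (integral_sub_average_sq_le hL2 (f y))
  have hle : μ B * ENNReal.ofReal V ≤
      ediam Ω ^ 2 * (2 ^ finrank ℝ E * ENNReal.ofReal D * μ Ω) := calc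
    μ B * ENNReal.ofReal V = ∫⁻ _ in B, ENNReal.ofReal V ∂μ := by
      rw [setLIntegral_const, mul_comm]
    _ ≤ ∫⁻ y in B, ∫⁻ x in Ω, ‖f x - f y‖ₑ ^ 2 ∂μ ∂μ := lintegral_mono hV
    _ ≤ _ := by
      rw [ofReal_integral_norm_sq hg2]
      exact setLIntegral_setLIntegral_enorm_sub_sq_le hΩ hbdd hB hBΩ hstar hf
  have hediam : ediam Ω ≠ ∞ := hbdd.ediam_ne_top
  have hV0 : 0 ≤ V := integral_nonneg fun _ ↦ by positivity
  have hD0 : 0 ≤ D := integral_nonneg fun _ ↦ by positivity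
  have hreal : μ.real B * V ≤ diam Ω ^ 2 * (2 ^ finrank ℝ E * D * μ.real Ω) := by
    simpa [Measure.real, diam, hV0, hD0] using ENNReal.toReal_mono (by finiteness) hle
  have hpos : 0 < μ.real B :=
    ENNReal.toReal_pos hμB (measure_ne_top_of_subset hBΩ hμΩ)
  rw [div_mul_eq_mul_div, div_mul_eq_mul_div, le_div_iff₀ hpos]
  linarith

end Poincare

section Injective

open Set Filter Topology

lemma not_eventually_eq_of_injOn {X Y : Type*} [TopologicalSpace X] {φ : X → Y} {U : Set X}
    {z : X} [NeBot (𝓝[≠] z)] (hU : U ∈ 𝓝 z) (hinj : InjOn φ U) : ¬ ∀ᶠ w in 𝓝 z, φ w = φ z := by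
  intro hconst
  have hne : ∀ᶠ w in 𝓝[≠] z, w ≠ z := self_mem_nhdsWithin
  obtain ⟨w, hwz, hw, hwU⟩ :=
    (hne.and (eventually_nhdsWithin_of_eventually_nhds (hconst.and hU))).exists
  exact hwz (hinj hwU (mem_of_mem_nhds hU) hw)

variable {φ : ℂ → ℂ} {U : Set ℂ} {z : ℂ}

lemma nhds_le_map_nhds_of_injOn (hU : IsOpen U) (hφ : DifferentiableOn ℂ φ U)
    (hinj : InjOn φ U) (hz : z ∈ U) : 𝓝 (φ z) ≤ map φ (𝓝 z) :=
  (hφ.analyticAt (hU.mem_nhds hz)).eventually_constant_or_nhds_le_map_nhds.resolve_left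
    (not_eventually_eq_of_injOn (hU.mem_nhds hz) hinj)

lemma isOpen_image_of_injOn (hU : IsOpen U) (hφ : DifferentiableOn ℂ φ U) (hinj : InjOn φ U) :
    IsOpen (φ '' U) := by
  rw [isOpen_iff_mem_nhds]
  rintro _ ⟨z, hz, rfl⟩
  exact nhds_le_map_nhds_of_injOn hU hφ hinj hz (image_mem_map (hU.mem_nhds hz))

lemma eventually_deriv_ne_zero_of_injOn (hU : IsOpen U) (hφ : DifferentiableOn ℂ φ U)
    (hinj : InjOn φ U) (hz : z ∈ U) : ∀ᶠ w in 𝓝[≠] z, deriv φ w ≠ 0 := by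
  refine ((hφ.deriv hU).analyticAt
    (hU.mem_nhds hz)).eventually_eq_zero_or_eventually_ne_zero.resolve_left fun hzero ↦ ?_
  obtain ⟨ε, hε, hball⟩ := Metric.eventually_nhds_iff_ball.1 (hzero.and (hU.mem_nhds hz))
  refine not_eventually_eq_of_injOn (hU.mem_nhds hz) hinj ?_
  filter_upwards [ball_mem_nhds z hε] with w hw
  exact isOpen_ball.is_const_of_deriv_eq_zero (convex_ball z ε).isPreconnected
    (hφ.mono fun v hv ↦ (hball v hv).2) (fun v hv ↦ (hball v hv).1) hw (mem_ball_self hε)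

lemma continuousAt_invFunOn (hU : IsOpen U) (hφ : DifferentiableOn ℂ φ U) (hinj : InjOn φ U)
    (hz : z ∈ U) : ContinuousAt (Function.invFunOn φ U) (φ z) := by
  have hleft : LeftInvOn (Function.invFunOn φ U) φ U := hinj.leftInvOn_invFunOn
  rw [ContinuousAt, hleft hz]
  refine (map_mono (nhds_le_map_nhds_of_injOn hU hφ hinj hz)).trans ?_
  rw [map_map]
  refine (map_congr ?_).trans_le map_id.le
  filter_upwards [hU.mem_nhds hz] with w hw using hleft hw

-- The inverse of `φ` is continuous, and holomorphic off the isolated critical values, so these are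
-- removable singularities.
lemma differentiableAt_invFunOn (hU : IsOpen U) (hφ : DifferentiableOn ℂ φ U) (hinj : InjOn φ U)
    (hz : z ∈ U) : DifferentiableAt ℂ (Function.invFunOn φ U) (φ z) := by
  set g := Function.invFunOn φ U
  have hleft : LeftInvOn g φ U := hinj.leftInvOn_invFunOn
  refine (Complex.analyticAt_of_differentiable_on_punctured_nhds_of_continuousAt ?_
    (continuousAt_invFunOn hU hφ hinj hz)).differentiableAt
  rw [eventually_nhdsWithin_iff]
  refine nhds_le_map_nhds_of_injOn hU hφ hinj hz (eventually_map.2 ?_)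
  filter_upwards [hU.mem_nhds hz, eventually_nhdsWithin_iff.1
    (eventually_deriv_ne_zero_of_injOn hU hφ hinj hz)] with w hw hderiv hne
  have hright : ∀ᶠ y in 𝓝 (φ w), φ (g y) = y := by
    filter_upwards [(isOpen_image_of_injOn hU hφ hinj).mem_nhds (mem_image_of_mem φ hw)] with y hy
    exact Function.invFunOn_eq hy
  have hgw : HasDerivAt φ (deriv φ w) (g (φ w)) := by
    rw [hleft hw]
    exact (hφ.differentiableAt (hU.mem_nhds hw)).hasDerivAt
  exact (hgw.of_local_left_inverse (continuousAt_invFunOn hU hφ hinj hw)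
    (hderiv (ne_of_apply_ne φ hne)) hright).differentiableAt

lemma deriv_ne_zero_of_injOn (hU : IsOpen U) (hφ : DifferentiableOn ℂ φ U)
    (hinj : InjOn φ U) (hz : z ∈ U) : deriv φ z ≠ 0 := by
  intro hzero
  set g := Function.invFunOn φ U
  have hcomp : HasDerivAt (g ∘ φ) (deriv g (φ z) * deriv φ z) z :=
    (differentiableAt_invFunOn hU hφ hinj hz).hasDerivAt.comp z
      (hφ.differentiableAt (hU.mem_nhds hz)).hasDerivAt
  have hid : HasDerivAt (g ∘ φ) 1 z := (hasDerivAt_id z).congr_of_eventuallyEq <| by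
    filter_upwards [hU.mem_nhds hz] with w hw using hinj.leftInvOn_invFunOn hw
  simpa [hzero] using hcomp.unique hid

end Injective

section LogDerivative

open Set intervalIntegral

lemma hasDerivAt_log_norm {g : ℝ → ℂ} {p : ℂ} {t : ℝ} (hg : HasDerivAt g (p * g t) t)
    (hg0 : g t ≠ 0) : HasDerivAt (fun u ↦ log ‖g u‖) p.re t := by
  have hinner : inner ℝ (g t) (p * g t) = p.re * ‖g t‖ ^ 2 := by
    rw [Complex.inner, mul_assoc, Complex.mul_conj, Complex.normSq_eq_norm_sq,
      Complex.re_mul_ofReal]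
  have hpos : ‖g t‖ ^ 2 ≠ 0 := by simpa using hg0
  have hsq := (hg.norm_sq.log hpos).div_const 2
  simp only [log_pow, Nat.cast_ofNat, mul_div_cancel_left₀ _ (two_ne_zero (α := ℝ))] at hsq
  refine hsq.congr_deriv ?_
  rw [hinner, mul_div_assoc, mul_div_cancel_right₀ _ hpos, mul_div_cancel_left₀ _ two_ne_zero]

lemma norm_le_exp_integral_mul_norm {g p : ℝ → ℂ} {ρ : ℝ → ℝ} {a b s t : ℝ}
    (hg : ∀ u, HasDerivAt g (p u * g u) u) (hg0 : ∀ u, g u ≠ 0) (hp : Continuous p)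
    (hρ : Continuous ρ) (hpρ : ∀ u, |(p u).re| ≤ ρ u) (hab : a ≤ b) (hs : s ∈ Icc a b)
    (ht : t ∈ Icc a b) : ‖g s‖ ≤ exp (∫ u in a..b, ρ u) * ‖g t‖ := by
  have hre : Continuous fun u ↦ (p u).re := Complex.continuous_re.comp hp
  have hdiff : log ‖g s‖ - log ‖g t‖ ≤ ∫ u in a..b, ρ u := calc
    log ‖g s‖ - log ‖g t‖ = ∫ u in t..s, (p u).re :=
      (integral_eq_sub_of_hasDerivAt (fun u _ ↦ hasDerivAt_log_norm (hg u) (hg0 u))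
        (hre.intervalIntegrable _ _)).symm
    _ ≤ |∫ u in t..s, ρ u| := (le_norm_self _).trans <| norm_integral_le_abs_of_norm_le
      (.of_forall hpρ) (hρ.intervalIntegrable _ _)
    _ ≤ |∫ u in a..b, ρ u| := abs_integral_mono_interval
      (by
        rw [uIoc_of_le hab]
        exact Ioc_subset_Ioc (le_min ht.1 hs.1) (max_le ht.2 hs.2))
      (.of_forall fun u ↦ (abs_nonneg _).trans (hpρ u)) (hρ.intervalIntegrable _ _)
    _ = ∫ u in a..b, ρ u := abs_of_nonneg <|
      integral_nonneg hab fun u _ ↦ (abs_nonneg _).trans (hpρ u)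
  rw [← Real.log_le_log_iff (by simp [hg0]) (by simp [exp_pos, hg0]),
    Real.log_mul (exp_pos _).ne' (by simp [hg0]), Real.log_exp]
  linarith

end LogDerivative

section Circle

variable {c z : ℂ} {r R : ℝ}

lemma circleMap_mem_ball_of_lt (c : ℂ) (hr0 : 0 ≤ r) (hrR : r < R) (θ : ℝ) :
    circleMap c r θ ∈ ball c R :=
  closedBall_subset_ball hrR (circleMap_mem_closedBall c hr0 θ)

lemma exists_circleMap_eq (hz : z ∈ sphere c r) : ∃ θ ∈ Set.Icc 0 (2 * π), circleMap c r θ = z := by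
  have hr : 0 ≤ r := nonneg_of_mem_sphere hz
  rw [← abs_of_nonneg hr, ← image_circleMap_Ioc] at hz
  obtain ⟨θ, hθ, rfl⟩ := hz
  exact ⟨θ, Set.Ioc_subset_Icc_self hθ, rfl⟩

end Circle

section InwardCurve

open Set Filter Topology

variable {φ : ℂ → ℂ} {φ' z v : ℂ} {γ : ℝ → ℂ} {s : ℝ}

lemma eventually_mem_image_closedBall_of_re_neg (hφ : HasStrictDerivAt φ φ' z) (hφ' : φ' ≠ 0)
    (hz0 : z ≠ 0) (hγ : HasDerivAt γ v s) (hγs : γ s = φ z) (hv : (v / (z * φ')).re < 0) :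
    ∀ᶠ t in 𝓝[>] s, γ t ∈ φ '' closedBall 0 ‖z‖ := by
  set ψ := hφ.localInverse φ φ' z hφ'
  have hψz : ψ (φ z) = z := (hφ.eventually_left_inverse hφ').self_of_nhds
  have hψγ : HasDerivAt (ψ ∘ γ) (φ'⁻¹ * v) s :=
    HasDerivAt.comp s (hγs ▸ (hφ.to_localInverse hφ').hasDerivAt) hγ
  have hinner : inner ℝ z (φ'⁻¹ * v) = ‖z‖ ^ 2 * (v / (z * φ')).re := by
    rw [Complex.inner, ← Complex.re_ofReal_mul, ← Complex.normSq_eq_norm_sq, ← Complex.mul_conj]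
    congr 1
    field_simp
  have hnorm : HasDerivAt (fun t ↦ ‖ψ (γ t)‖ ^ 2) (2 * inner ℝ z (φ'⁻¹ * v)) s := by
    simpa [hγs, hψz] using hψγ.norm_sq
  have hneg : 2 * inner ℝ z (φ'⁻¹ * v) < 0 := by
    have : 0 < ‖z‖ := norm_pos_iff.2 hz0
    rw [hinner]
    have := mul_neg_of_pos_of_neg (pow_pos this 2) hv
    linarith
  have hright : ∀ᶠ t in 𝓝[>] s, φ (ψ (γ t)) = γ t :=
    eventually_nhdsWithin_of_eventually_nhds <| hγ.continuousAt.eventually <|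
      hγs ▸ hφ.eventually_right_inverse hφ'
  filter_upwards [hright, hnorm.hasDerivWithinAt.limsup_slope_le' self_notMem_Ioi hneg,
    self_mem_nhdsWithin] with t ht hslope hst
  refine ⟨ψ (γ t), ?_, ht⟩
  rw [slope_def_field, hγs, hψz, div_neg_iff] at hslope
  have hst' : 0 < t - s := sub_pos.2 hst
  rw [mem_closedBall_zero_iff]
  refine le_of_sq_le_sq ?_ (norm_nonneg z)
  rcases hslope with h | h <;> linarith

end InwardCurve

/-- A strongly starlike function of the unit disc, i.e. the Riemann map of a `β`-star-shaped domain.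
The condition `|arg (z φ'(z) / φ(z))| ≤ βπ/2` is written without arguments of complex numbers: with
`κ = cos (βπ/2)` it confines `z φ'(z) / φ(z)` to the sector `κ |w| ≤ Re w`. -/
structure IsStronglyStarlike (κ : ℝ) (φ : ℂ → ℂ) : Prop where
  differentiableOn : DifferentiableOn ℂ φ (ball 0 1)
  injOn : Set.InjOn φ (ball 0 1)
  map_zero : φ 0 = 0
  le_re : ∀ z ∈ ball (0 : ℂ) 1, z ≠ 0 →
    κ * ‖z * deriv φ z / φ z‖ ≤ (z * deriv φ z / φ z).re

namespace IsStronglyStarlike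

open Set Filter Topology AffineMap

variable {κ r : ℝ} {φ : ℂ → ℂ} {x y z z₁ z₂ : ℂ}

lemma of_abs_arg_le {β : ℝ} (hβ : β ≤ 2) (hφd : DifferentiableOn ℂ φ (ball 0 1))
    (hφi : InjOn φ (ball 0 1)) (hφ0 : φ 0 = 0)
    (harg : ∀ z ∈ ball (0 : ℂ) 1, z ≠ 0 → |(z * deriv φ z / φ z).arg| ≤ β * π / 2) :
    IsStronglyStarlike (cos (β * π / 2)) φ where
  differentiableOn := hφd
  injOn := hφi
  map_zero := hφ0
  le_re z hz hz0 := by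
    set q := z * deriv φ z / φ z
    rw [← Complex.norm_mul_cos_arg, ← cos_abs q.arg, mul_comm]
    gcongr
    exact cos_le_cos_of_nonneg_of_le_pi (abs_nonneg _) (by nlinarith [pi_pos]) (harg z hz hz0)

lemma differentiableAt (hφ : IsStronglyStarlike κ φ) (hz : z ∈ ball 0 1) :
    DifferentiableAt ℂ φ z :=
  hφ.differentiableOn.differentiableAt (isOpen_ball.mem_nhds hz)

lemma deriv_ne_zero (hφ : IsStronglyStarlike κ φ) (hz : z ∈ ball 0 1) : deriv φ z ≠ 0 :=
  deriv_ne_zero_of_injOn isOpen_ball hφ.differentiableOn hφ.injOn hz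

lemma ne_zero (hφ : IsStronglyStarlike κ φ) (hz : z ∈ ball 0 1) (hz0 : z ≠ 0) : φ z ≠ 0 :=
  fun h ↦ hz0 (hφ.injOn hz (mem_ball_self one_pos) (h.trans hφ.map_zero.symm))

lemma mul_dslope (hφ : IsStronglyStarlike κ φ) (z : ℂ) : z * dslope φ 0 z = φ z := by
  simpa [hφ.map_zero] using sub_smul_dslope φ 0 z

lemma differentiableOn_dslope (hφ : IsStronglyStarlike κ φ) :
    DifferentiableOn ℂ (dslope φ 0) (ball 0 1) :=
  (Complex.differentiableOn_dslope (ball_mem_nhds _ one_pos)).2 hφ.differentiableOn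

lemma dslope_ne_zero (hφ : IsStronglyStarlike κ φ) (hz : z ∈ ball 0 1) : dslope φ 0 z ≠ 0 := by
  rcases eq_or_ne z 0 with rfl | hz0
  · simpa using hφ.deriv_ne_zero hz
  · exact right_ne_zero_of_mul (hφ.mul_dslope z ▸ hφ.ne_zero hz hz0)

lemma ratio_eq_deriv_div_dslope (hφ : IsStronglyStarlike κ φ) (hz0 : z ≠ 0) :
    z * deriv φ z / φ z = deriv φ z / dslope φ 0 z := by
  rw [← hφ.mul_dslope z, mul_div_mul_left _ _ hz0]

lemma differentiableOn_deriv_div_dslope (hφ : IsStronglyStarlike κ φ) :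
    DifferentiableOn ℂ (fun z ↦ deriv φ z / dslope φ 0 z) (ball 0 1) :=
  (hφ.differentiableOn.deriv isOpen_ball).div hφ.differentiableOn_dslope
    fun _ hz ↦ hφ.dslope_ne_zero hz

lemma continuous_ratio_circleMap (hφ : IsStronglyStarlike κ φ) (hr0 : 0 < r) (hr1 : r < 1) :
    Continuous fun θ ↦
      circleMap 0 r θ * deriv φ (circleMap 0 r θ) / φ (circleMap 0 r θ) := by
  simp only [hφ.ratio_eq_deriv_div_dslope (circleMap_ne_center hr0.ne')]
  exact hφ.differentiableOn_deriv_div_dslope.continuousOn.comp_continuous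
    (continuous_circleMap 0 r) (circleMap_mem_ball_of_lt 0 hr0.le hr1)

lemma integral_re_ratio_circleMap (hφ : IsStronglyStarlike κ φ) (hr0 : 0 < r) (hr1 : r < 1) :
    ∫ θ in 0..2 * π, (circleMap 0 r θ * deriv φ (circleMap 0 r θ) / φ (circleMap 0 r θ)).re =
      2 * π := by
  have hdc : DiffContOnCl ℂ (fun z ↦ deriv φ z / dslope φ 0 z) (ball 0 |r|) :=
    (hφ.differentiableOn_deriv_div_dslope.mono
      (closedBall_subset_ball (by rwa [abs_of_pos hr0]))).diffContOnCl_ball subset_rfl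
  have hmean := hdc.circleAverage
  rw [circleAverage_def, inv_smul_eq_iff₀ (by positivity), dslope_same,
    div_self (hφ.deriv_ne_zero (mem_ball_self one_pos))] at hmean
  have hqint := (hφ.continuous_ratio_circleMap hr0 hr1).intervalIntegrable (μ := volume) 0 (2 * π)
  refine (Complex.reCLM.intervalIntegral_comp_comm hqint).trans ?_
  simp only [hφ.ratio_eq_deriv_div_dslope (circleMap_ne_center hr0.ne'), hmean]
  simp

lemma hasDerivAt_comp_circleMap (hφ : IsStronglyStarlike κ φ) (hr0 : 0 < r) (hr1 : r < 1)
    (θ : ℝ) : HasDerivAt (fun θ ↦ φ (circleMap 0 r θ))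
      (circleMap 0 r θ * deriv φ (circleMap 0 r θ) / φ (circleMap 0 r θ) * Complex.I *
        φ (circleMap 0 r θ)) θ := by
  have hmem := circleMap_mem_ball_of_lt 0 hr0.le hr1 θ
  have hne := hφ.ne_zero hmem (circleMap_ne_center hr0.ne')
  refine ((hφ.differentiableAt hmem).hasDerivAt.comp θ
    (hasDerivAt_circleMap 0 r θ)).congr_deriv ?_
  field_simp

lemma norm_le_exp_mul_norm_of_norm_eq (hφ : IsStronglyStarlike κ φ) (hκ : 0 < κ)
    (hz₁ : z₁ ∈ ball 0 1) (h : ‖z₁‖ = ‖z₂‖) : ‖φ z₁‖ ≤ exp (2 * π / κ) * ‖φ z₂‖ := by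
  rcases eq_or_ne z₁ 0 with rfl | hz₁0
  · simp only [hφ.map_zero, norm_zero]
    positivity
  obtain ⟨r, hr⟩ : ∃ r, ‖z₁‖ = r := ⟨_, rfl⟩
  have hr0 : 0 < r := hr ▸ norm_pos_iff.2 hz₁0
  have hr1 : r < 1 := hr ▸ mem_ball_zero_iff.1 hz₁
  obtain ⟨θ₁, hθ₁, rfl⟩ := exists_circleMap_eq (mem_sphere_zero_iff_norm.2 hr)
  obtain ⟨θ₂, hθ₂, rfl⟩ := exists_circleMap_eq (mem_sphere_zero_iff_norm.2 (h ▸ hr))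
  set q : ℝ → ℂ := fun θ ↦
    circleMap 0 r θ * deriv φ (circleMap 0 r θ) / φ (circleMap 0 r θ)
  have hq : Continuous q := hφ.continuous_ratio_circleMap hr0 hr1
  have hmem := circleMap_mem_ball_of_lt 0 hr0.le hr1
  have him : ∀ θ, |(q θ * Complex.I).re| ≤ (q θ).re / κ := by
    intro θ
    rw [Complex.mul_I_re, abs_neg, le_div_iff₀' hκ]
    have := hφ.le_re _ (hmem θ) (circleMap_ne_center hr0.ne')
    exact (mul_le_mul_of_nonneg_left (Complex.abs_im_le_norm _) hκ.le).trans this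
  convert norm_le_exp_integral_mul_norm (fun θ ↦ hφ.hasDerivAt_comp_circleMap hr0 hr1 θ)
    (fun θ ↦ hφ.ne_zero (hmem θ) (circleMap_ne_center hr0.ne')) (hq.mul continuous_const)
    ((Complex.continuous_re.comp hq).div_const κ) him two_pi_pos.le hθ₁ hθ₂ using 3
  simp only [intervalIntegral.integral_div, Function.comp_apply]
  rw [hφ.integral_re_ratio_circleMap hr0 hr1]

lemma norm_deriv_zero_mul_norm_le (hφ : IsStronglyStarlike κ φ) (hκ : 0 < κ)
    (hz : z ∈ ball 0 1) : ‖deriv φ 0‖ * ‖z‖ ≤ exp (2 * π / κ) * ‖φ z‖ := by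
  rcases eq_or_ne z 0 with rfl | hz0
  · simp [hφ.map_zero]
  have hpos : 0 < ‖z‖ := norm_pos_iff.2 hz0
  have hsphere : ∀ w ∈ frontier (ball 0 ‖z‖),
      ‖dslope φ 0 w‖ ≤ exp (2 * π / κ) * ‖φ z‖ / ‖z‖ := by
    intro w hw
    rw [frontier_ball _ hpos.ne', mem_sphere_zero_iff_norm] at hw
    rw [le_div_iff₀' hpos, ← hw, ← norm_mul, hφ.mul_dslope]
    exact hφ.norm_le_exp_mul_norm_of_norm_eq hκ (by simpa [hw] using hz) hw
  have hdiff : DiffContOnCl ℂ (dslope φ 0) (ball 0 ‖z‖) :=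
    (hφ.differentiableOn_dslope.mono (closedBall_subset_ball (by simpa using hz))).diffContOnCl_ball
      subset_rfl
  have hmax := Complex.norm_le_of_forall_mem_frontier_norm_le isBounded_ball hdiff hsphere
    (subset_closure (mem_ball_self hpos))
  rwa [dslope_same, le_div_iff₀ hpos] at hmax

lemma norm_le_exp_mul_norm_deriv_zero (hφ : IsStronglyStarlike κ φ) (hκ : 0 < κ)
    (hz : z ∈ ball 0 1) : ‖φ z‖ ≤ exp (2 * π / κ) * ‖deriv φ 0‖ * ‖z‖ := by
  rcases eq_or_ne z 0 with rfl | hz0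
  · simp [hφ.map_zero]
  have hpos : 0 < ‖z‖ := norm_pos_iff.2 hz0
  have hφpos : 0 < ‖φ z‖ := norm_pos_iff.2 (hφ.ne_zero hz hz0)
  have hsphere : ∀ w ∈ frontier (ball 0 ‖z‖),
      ‖(dslope φ 0)⁻¹ w‖ ≤ exp (2 * π / κ) * ‖z‖ / ‖φ z‖ := by
    intro w hw
    rw [frontier_ball _ hpos.ne', mem_sphere_zero_iff_norm] at hw
    have hwb : w ∈ ball 0 1 := by simpa [hw] using hz
    have hle := hφ.norm_le_exp_mul_norm_of_norm_eq hκ hz hw.symm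
    rw [← hφ.mul_dslope w, norm_mul, hw] at hle
    rw [Pi.inv_apply, norm_inv, inv_le_iff_one_le_mul₀ (norm_pos_iff.2 (hφ.dslope_ne_zero hwb)),
      div_mul_eq_mul_div, one_le_div hφpos]
    linarith
  have hsub : closedBall (0 : ℂ) ‖z‖ ⊆ ball 0 1 := closedBall_subset_ball (by simpa using hz)
  have hdiff : DiffContOnCl ℂ (dslope φ 0)⁻¹ (ball 0 ‖z‖) :=
    ((hφ.differentiableOn_dslope.mono hsub).diffContOnCl_ball subset_rfl).inv fun w hw ↦
      hφ.dslope_ne_zero (hsub (closure_ball_subset_closedBall hw))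
  have hmax := Complex.norm_le_of_forall_mem_frontier_norm_le isBounded_ball hdiff hsphere
    (subset_closure (mem_ball_self hpos))
  rw [Pi.inv_apply, dslope_same, norm_inv, inv_le_iff_one_le_mul₀
    (norm_pos_iff.2 (hφ.deriv_ne_zero (mem_ball_self one_pos))), div_mul_eq_mul_div,
    one_le_div hφpos] at hmax
  linarith

lemma re_sub_div_pos (hφ : IsStronglyStarlike κ φ) (hz : z ∈ ball 0 1) (hz0 : z ≠ 0)
    (hy : ‖y‖ < κ * ‖φ z‖) : 0 < ((φ z - y) / (z * deriv φ z)).re := by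
  have hφz : φ z ≠ 0 := hφ.ne_zero hz hz0
  have hderiv : deriv φ z ≠ 0 := hφ.deriv_ne_zero hz
  set q := z * deriv φ z / φ z with hq_def
  have hq : 0 < ‖q‖ := norm_pos_iff.2 (div_ne_zero (mul_ne_zero hz0 hderiv) hφz)
  have heq : (φ z - y) / (z * deriv φ z) = q⁻¹ - y / φ z * q⁻¹ := by
    rw [hq_def]
    field_simp
  have hinv : κ * ‖q‖⁻¹ ≤ q⁻¹.re := by
    rw [Complex.inv_re, Complex.normSq_eq_norm_sq, le_div_iff₀ (by positivity)]
    calc κ * ‖q‖⁻¹ * ‖q‖ ^ 2 = κ * ‖q‖ := by field_simp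
      _ ≤ q.re := hφ.le_re z hz hz0
  have hsmall : (y / φ z * q⁻¹).re < κ * ‖q‖⁻¹ := by
    refine (Complex.re_le_norm _).trans_lt ?_
    rw [norm_mul, norm_div, norm_inv]
    gcongr
    rwa [div_lt_iff₀ (norm_pos_iff.2 hφz)]
  rw [heq, Complex.sub_re]
  linarith

lemma eventually_lineMap_mem_image_closedBall (hφ : IsStronglyStarlike κ φ) (hr0 : 0 < r)
    (hr1 : r < 1) (hy : ∀ z, ‖z‖ = r → ‖y‖ < κ * ‖φ z‖) {s : ℝ} (hs1 : s < 1)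
    (hz : z ∈ closedBall 0 r) (hzs : φ z = lineMap x y s) :
    ∀ᶠ u in 𝓝[>] s, lineMap x y u ∈ φ '' closedBall 0 r := by
  have hsub : closedBall (0 : ℂ) r ⊆ ball 0 1 := closedBall_subset_ball hr1
  rw [mem_closedBall_zero_iff] at hz
  rcases hz.lt_or_eq with hzr | rfl
  · have hopen : IsOpen (φ '' ball 0 r) := isOpen_image_of_injOn isOpen_ball
      (hφ.differentiableOn.mono (ball_subset_closedBall.trans hsub))
      (hφ.injOn.mono (ball_subset_closedBall.trans hsub))
    refine eventually_nhdsWithin_of_eventually_nhds ?_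
    filter_upwards [lineMap_continuous.continuousAt.preimage_mem_nhds
      (hopen.mem_nhds (hzs ▸ mem_image_of_mem φ (by simpa using hzr)))] with u hu
    exact image_mono ball_subset_closedBall hu
  · have hzb : z ∈ ball 0 1 := by simpa using hr1
    have hdir : y - x = (-(1 - s)⁻¹ : ℝ) • (φ z - y) := by
      have : 1 - s ≠ 0 := (sub_pos.2 hs1).ne'
      rw [hzs, lineMap_apply_module]
      match_scalars <;> field_simp
      ring
    refine eventually_mem_image_closedBall_of_re_neg (v := y - x)
      (hφ.differentiableOn.analyticAt (isOpen_ball.mem_nhds hzb)).hasStrictDerivAt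
      (hφ.deriv_ne_zero hzb) (norm_pos_iff.1 hr0) hasDerivAt_lineMap hzs.symm ?_
    rw [hdir, smul_div_assoc, Complex.smul_re, smul_eq_mul]
    exact mul_neg_of_neg_of_pos (by simpa using hs1)
      (hφ.re_sub_div_pos hzb (norm_pos_iff.1 hr0) (hy z rfl))

lemma starConvex_image_closedBall (hφ : IsStronglyStarlike κ φ) (hr0 : 0 < r) (hr1 : r < 1)
    (hy : ∀ z, ‖z‖ = r → ‖y‖ < κ * ‖φ z‖) : StarConvex ℝ y (φ '' closedBall 0 r) := by
  rw [starConvex_iff_segment_subset]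
  intro x hx
  rw [segment_symm, segment_eq_image_lineMap, image_subset_iff]
  have hclosed : IsClosed (φ '' closedBall 0 r) :=
    ((isCompact_closedBall 0 r).image_of_continuousOn
      (hφ.differentiableOn.continuousOn.mono (closedBall_subset_ball hr1))).isClosed
  refine ((hclosed.preimage lineMap_continuous).inter
    isClosed_Icc).Icc_subset_of_forall_exists_gt (by simpa using hx) ?_
  rintro s ⟨⟨z, hz, hzs⟩, -, hs1⟩ t hst
  exact ((hφ.eventually_lineMap_mem_image_closedBall hr0 hr1 hy hs1 hz hzs).and
    (Ioc_mem_nhdsGT hst)).exists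

lemma starConvex_image_ball (hφ : IsStronglyStarlike κ φ) (hκ : 0 < κ)
    (hy : y ∈ ball 0 (κ * ‖deriv φ 0‖ / exp (2 * π / κ))) :
    StarConvex ℝ y (φ '' ball 0 1) := by
  have hd : 0 < ‖deriv φ 0‖ := norm_pos_iff.2 (hφ.deriv_ne_zero (mem_ball_self one_pos))
  rw [starConvex_iff_segment_subset]
  rintro _ ⟨z, hz, rfl⟩
  have hy1 : ‖y‖ * exp (2 * π / κ) / (κ * ‖deriv φ 0‖) < 1 := by
    rwa [div_lt_one (by positivity), ← lt_div_iff₀ (exp_pos _), ← mem_ball_zero_iff]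
  obtain ⟨r, hr, hr1⟩ := exists_between (max_lt (mem_ball_zero_iff.1 hz) hy1)
  obtain ⟨hzr, hyr⟩ := max_lt_iff.1 hr
  have hyφ : ∀ w, ‖w‖ = r → ‖y‖ < κ * ‖φ w‖ := by
    intro w hw
    have hgrowth := hφ.norm_deriv_zero_mul_norm_le hκ (z := w) (by simpa [hw] using hr1)
    rw [div_lt_iff₀ (by positivity)] at hyr
    refine lt_of_mul_lt_mul_right ?_ (exp_pos (2 * π / κ)).le
    calc ‖y‖ * exp (2 * π / κ) < κ * (‖deriv φ 0‖ * ‖w‖) := by rw [hw]; linarith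
      _ ≤ κ * (exp (2 * π / κ) * ‖φ w‖) := by gcongr
      _ = κ * ‖φ w‖ * exp (2 * π / κ) := by ring
  refine ((hφ.starConvex_image_closedBall ((norm_nonneg z).trans_lt hzr) hr1 hyφ).segment_subset
    (mem_image_of_mem φ (by simpa using hzr.le))).trans (image_mono (closedBall_subset_ball hr1))

lemma mem_image_ball (hφ : IsStronglyStarlike κ φ) (hκ : 0 < κ)
    (hy : y ∈ ball 0 (κ * ‖deriv φ 0‖ / exp (2 * π / κ))) : y ∈ φ '' ball 0 1 :=
  (hφ.starConvex_image_ball hκ hy).mem ((nonempty_ball.2 one_pos).image φ)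

lemma image_ball_subset_closedBall (hφ : IsStronglyStarlike κ φ) (hκ : 0 < κ) :
    φ '' ball 0 1 ⊆ closedBall 0 (exp (2 * π / κ) * ‖deriv φ 0‖) := by
  rintro _ ⟨z, hz, rfl⟩
  rw [mem_closedBall_zero_iff]
  exact (hφ.norm_le_exp_mul_norm_deriv_zero hκ hz).trans
    (mul_le_of_le_one_right (by positivity) (mem_ball_zero_iff.1 hz).le)

end IsStronglyStarlike

section Constants

variable {α β c κ ν : ℝ}

lemma one_le_cos_mul_cot (hβ0 : 0 ≤ β) (hβ1 : β < 1) :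
    1 ≤ cos (β * π / 2) * cot ((1 - β) * π / 4) := by
  set x := (1 - β) * π / 4
  have hx0 : 0 < x := by have := sub_pos.2 hβ1; positivity
  have hx1 : x ≤ π / 4 := by simp only [x]; nlinarith [pi_pos]
  have hsin : sin x ≠ 0 := (sin_pos_of_pos_of_lt_pi hx0 (by linarith [pi_pos])).ne'
  calc 1 ≤ 1 + cos (2 * x) :=
        le_add_of_nonneg_right (cos_nonneg_of_neg_pi_div_two_le_of_le (by linarith) (by linarith))
    _ = sin (2 * x) * cot x := by
        rw [cos_two_mul, sin_two_mul, cot_eq_cos_div_sin]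
        field_simp
        ring
    _ = cos (β * π / 2) * cot x := by
        rw [← cos_pi_div_two_sub]
        simp only [x]
        ring_nf

lemma rpow_one_div_le_two_s12 (hα : 2 < α) (hν0 : 0 ≤ ν) (hν1 : ν < 1) :
    ((α - 1) * (1 - ν)) ^ (1 / α) ≤ 2 := by
  have hbernoulli : 1 + α * 1 ≤ (1 + 1) ^ α :=
    one_add_mul_self_le_rpow_one_add (by norm_num) (by linarith)
  have hpos : 0 ≤ (α - 1) * (1 - ν) := mul_nonneg (by linarith) (by linarith)
  rw [one_div, rpow_inv_le_iff_of_pos hpos zero_le_two (by linarith)]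
  calc (α - 1) * (1 - ν) ≤ 1 + α * 1 := by nlinarith
    _ ≤ 2 ^ α := by rwa [one_add_one_eq_two] at hbernoulli

lemma eight_mul_pi_div_le (hκ : 0 < κ) (hκc : 1 ≤ κ * c) (hc : 1 ≤ c) :
    8 * π / κ ≤ π ^ 2 * (2 + π ^ 4) ^ 2 * c ^ 4 / (2 * log 3) := by
  have hlog : log 3 ≤ 2 := by linarith [log_le_sub_one_of_pos (show (0 : ℝ) < 3 by norm_num)]
  have hπ : 32 ≤ π * (2 + π ^ 4) ^ 2 := by
    have : (3 : ℝ) ≤ π := pi_gt_three.le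
    calc (32 : ℝ) ≤ 3 * (2 + 3 ^ 4) ^ 2 := by norm_num
      _ ≤ π * (2 + π ^ 4) ^ 2 := by gcongr
  rw [div_le_div_iff₀ hκ (by positivity)]
  calc 8 * π * (2 * log 3) ≤ π * 32 * 1 := by nlinarith [pi_pos]
    _ ≤ π * (π * (2 + π ^ 4) ^ 2) * (κ * c ^ 4) := by
        gcongr
        exact hκc.trans (by gcongr; exact le_self_pow₀ hc (by norm_num))
    _ = _ := by ring

lemma starlike_constant_le (hκ0 : 0 < κ) (hκ1 : κ ≤ 1) (hκc : 1 ≤ κ * c) (hα : 2 < α)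
    (hν0 : 0 ≤ ν) (hν1 : ν < 1) :
    16 * exp (8 * π / κ) / (π * κ ^ 2) ≤
      ((10 ^ 6 / ((α - 1) * (1 - ν)) ^ (1 / α)) ^ 2 * c ^ 4 / π) *
        ((2 * α - 2) / (α - 2)) ^ ((2 * α - 2) / α) *
        exp (π ^ 2 * (2 + π ^ 4) ^ 2 * c ^ 4 / (2 * log 3)) := by
  have hc0 : 0 < c := pos_of_mul_pos_right (one_pos.trans_le hκc) hκ0.le
  have hc : 1 ≤ c := hκc.trans (mul_le_of_le_one_left hc0.le hκ1)
  have hbase : 0 < (α - 1) * (1 - ν) := mul_pos (by linarith) (by linarith)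
  have hfirst : (4 : ℝ) ≤ 10 ^ 6 / ((α - 1) * (1 - ν)) ^ (1 / α) := by
    rw [le_div_iff₀ (by positivity)]
    linarith [rpow_one_div_le_two_s12 hα hν0 hν1]
  have hsecond : 1 ≤ ((2 * α - 2) / (α - 2)) ^ ((2 * α - 2) / α) :=
    one_le_rpow (by rw [one_le_div] <;> linarith) (div_nonneg (by linarith) (by linarith))
  have hinv : 1 / κ ^ 2 ≤ c ^ 4 := calc
    1 / κ ^ 2 ≤ c ^ 2 := by
      rw [div_le_iff₀ (by positivity), ← mul_pow, mul_comm]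
      exact one_le_pow₀ hκc
    _ ≤ c ^ 4 := pow_le_pow_right₀ hc (by norm_num)
  calc 16 * exp (8 * π / κ) / (π * κ ^ 2)
      = 4 ^ 2 * (1 / κ ^ 2) / π * 1 * exp (8 * π / κ) := by field_simp; norm_num
    _ ≤ _ := by
      gcongr ?_ * ?_ * exp ?_
      · gcongr
      · exact eight_mul_pi_div_le hκ0 hκc hc

end Constants

theorem neumann_poincare_star_shaped_general {κ : ℝ} (hκ : 0 < κ) {φ : ℂ → ℂ}
    (hφ : IsStronglyStarlike κ φ) {f : ℂ → ℝ} (hf : ContDiffOn ℝ 1 f (φ '' ball 0 1))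
    (hf2 : IntegrableOn (fun z ↦ f z ^ 2) (φ '' ball 0 1))
    (hg2 : IntegrableOn (fun z ↦ ‖fderiv ℝ f z‖ ^ 2) (φ '' ball 0 1)) :
    ∫ z in φ '' ball 0 1, (f z - ⨍ w in φ '' ball 0 1, f w) ^ 2 ≤
      16 * exp (8 * π / κ) / (π * κ ^ 2) * volume.real (φ '' ball 0 1) *
        ∫ z in φ '' ball 0 1, ‖fderiv ℝ f z‖ ^ 2 := by
  set Ω := φ '' ball 0 1
  set e := exp (2 * π / κ)
  set d := ‖deriv φ 0‖
  set B := ball (0 : ℂ) (κ * d / e)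
  have hd : 0 < d := norm_pos_iff.2 (hφ.deriv_ne_zero (mem_ball_self one_pos))
  have hvol : volume.real B = π * (κ * d / e) ^ 2 := by
    rw [Measure.real, Complex.volume_ball, ENNReal.toReal_mul, ENNReal.toReal_pow,
      ENNReal.toReal_ofReal (by positivity), mul_comm]
    rfl
  have hexp : exp (8 * π / κ) = e ^ 4 := by
    rw [← exp_nat_mul]
    ring_nf
  have hΩ : Ω ⊆ closedBall 0 (e * d) := hφ.image_ball_subset_closedBall hκ
  have hdiam : diam Ω ≤ 2 * (e * d) := diam_le_of_subset_closedBall (by positivity) hΩ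
  refine (integral_sub_average_sq_le_of_starConvex
    (isOpen_image_of_injOn isOpen_ball hφ.differentiableOn hφ.injOn)
    (isBounded_closedBall.subset hΩ) measurableSet_ball
    (fun y hy ↦ hφ.mem_image_ball hκ hy)
    (measure_ball_pos volume 0 (by positivity)).ne'
    (fun y hy ↦ hφ.starConvex_image_ball hκ hy) hf hf2 hg2).trans ?_
  gcongr ?_ * _ * _
  calc 2 ^ Module.finrank ℝ ℂ * diam Ω ^ 2 / volume.real B
      ≤ 2 ^ 2 * (2 * (e * d)) ^ 2 / (π * (κ * d / e) ^ 2) := by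
        rw [Complex.finrank_real_complex, hvol]
        gcongr
    _ = 16 * exp (8 * π / κ) / (π * κ ^ 2) := by
        rw [hexp]
        field_simp
        ring

/-- Spectral-type Poincaré inequality in a `β`-star-shaped domain
(Rayleigh-quotient form of the lower bound for the first nontrivial Neumann
eigenvalue): `Ω = φ(𝔻)` with `φ` injective holomorphic, `φ(0) = 0`, and
`|arg(zφ′(z)/φ(z))| ≤ βπ/2` on `𝔻`, `K = cot²((1−β)π/4)`. -/
theorem neumann_poincare_star_shaped
    (β : ℝ) (hβ0 : 0 < β) (hβ1 : β < 1)
    (φ : ℂ → ℂ) (hφd : DifferentiableOn ℂ φ (Metric.ball 0 1))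
    (hφi : Set.InjOn φ (Metric.ball 0 1)) (hφ0 : φ 0 = 0)
    (hstar : ∀ z ∈ Metric.ball (0 : ℂ) 1, z ≠ 0 →
      |Complex.arg (z * deriv φ z / φ z)| ≤ β * π / 2)
    (Ω : Set ℂ) (hΩ : Ω = φ '' Metric.ball 0 1) (hbdd : Bornology.IsBounded Ω)
    (K : ℝ) (hKdef : K = Real.cot ((1 - β) * π / 4) ^ 2)
    (α : ℝ) (hα : 2 < α) (hαK : α * (K ^ 2 - 1) < 2 * K ^ 2)
    (hν : (10 : ℝ) ^ (4 * α) * (24 * π ^ 2 * Real.cot ((1 - β) * π / 4) ^ 4) ^ α *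
        ((α - 2) / (α - 1)) < 1)
    (f : ℂ → ℝ) (hf : ContDiffOn ℝ 1 f Ω)
    (hf2 : IntegrableOn (fun z => (f z) ^ 2) Ω)
    (hg2 : IntegrableOn (fun z => ‖fderiv ℝ f z‖ ^ 2) Ω) :
    ∫ z in Ω, (f z - ⨍ w in Ω, f w) ^ 2
      ≤ ((10 ^ 6 /
            ((α - 1) *
              (1 - (10 : ℝ) ^ (4 * α) * (24 * π ^ 2 * Real.cot ((1 - β) * π / 4) ^ 4) ^ α *
                ((α - 2) / (α - 1)))) ^ (1 / α)) ^ 2 *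
            Real.cot ((1 - β) * π / 4) ^ 4 / π) *
          ((2 * α - 2) / (α - 2)) ^ ((2 * α - 2) / α) *
          Real.exp (π ^ 2 * (2 + π ^ 4) ^ 2 * Real.cot ((1 - β) * π / 4) ^ 4 /
            (2 * Real.log 3)) *
          (volume Ω).toReal *
          ∫ z in Ω, ‖fderiv ℝ f z‖ ^ 2 := by
  subst hΩ
  have hφ := IsStronglyStarlike.of_abs_arg_le (by linarith) hφd hφi hφ0 hstar
  have hκ : 0 < cos (β * π / 2) :=
    cos_pos_of_mem_Ioo ⟨by nlinarith [pi_pos], by nlinarith [pi_pos]⟩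
  refine (neumann_poincare_star_shaped_general hκ hφ hf hf2 hg2).trans ?_
  rw [Measure.real]
  gcongr ?_ * _ * _
  exact starlike_constant_le hκ (cos_le_one _) (one_le_cos_mul_cot hβ0.le hβ1) hα
    (mul_nonneg (by positivity) (div_nonneg (by linarith) (by linarith))) hν
end
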